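/- There exists an absolute constant C > 0 such that for all real α, β ≥ 0, all n ∈ ℕ₀ and all x ∈ [−1,1], ((1−x)/2)^{α/2+1/4} ((1+x)/2)^{β/2+1/4} |P_n^{(α,β)}(x)| ≤ C (2n+α+β+1)^{−1/4} ( Γ(n+α+1) Γ(n+β+1) / ( Γ(n+1) Γ(n+α+β+1) ) )^{1/2}, where Γ is the Gamma function. -/

import Mathlib

/-- Generalized binomial coefficient `C(t, j) = t(t-1)⋯(t-j+1)/j!`. -/
noncomputable def genChoose (t : ℝ) (j : ℕ) : ℝ :=
  (∏ i ∈ Finset.range j, (t - (i : ℝ))) / (Nat.factorial j : ℝ)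

/-- Jacobi polynomial
`P_n^{(α,β)}(x) = ∑_{s=0}^n C(n+α, n-s) C(n+β, s) ((x-1)/2)^s ((x+1)/2)^{n-s}`. -/
noncomputable def jacobi (α β : ℝ) (n : ℕ) (x : ℝ) : ℝ :=
  ∑ s ∈ Finset.range (n + 1),
    genChoose ((n : ℝ) + α) (n - s) * genChoose ((n : ℝ) + β) s *
      ((x - 1) / 2) ^ s * ((x + 1) / 2) ^ (n - s)

/-!
The function `z = (1-x)^(α/2) (1+x)^(β/2) P_n^{(α,β)}` solves
`((1-x²) z')' + T/(4(1-x²)) z = 0`, where the potential `T` is a concave quadratic polynomial whose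
zeros, the turning points `c ± R`, lie in `[-1, 1]`. The claim is that `(1-x²) z⁴` is at most a
constant times `2n + α + β + 1` times `(∫ z²)²`, because `∫ z²` is the explicit norm of
`P_n^{(α,β)}`.

The square of a solution satisfies a linear equation of third order. Hence every multiplier `h`
gives an identity between an integral of `z²` and a boundary flux, a quadratic form in `z` and its
derivative with coefficients built from `h`. For `h = (c + R + δ - x)^(-1/2)`, the inverse square
root with its singularity moved by a suitable `δ` past the right turning point, the integral is at
most a multiple of `∫ z²`. At a maximum of `(1-x²) z⁴` to the right of `c` the derivative of `z` is
determined by `z`, so the flux becomes an explicit multiple of `z²`, and a lower bound for this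
multiple gives the claim. Maxima to the left of `c` are covered by the reflection `x ↦ -x`.
-/

open Finset.HasAntidiagonal (antidiagonal mem_antidiagonal)

theorem succ_mul_genChoose_succ (t : ℝ) (j : ℕ) :
    ((j : ℝ) + 1) * genChoose t (j + 1) = (t - j) * genChoose t j := by
  rw [genChoose, genChoose, Finset.prod_range_succ, Nat.factorial_succ]
  push_cast
  field_simp

theorem sum_antidiagonal_succ_fst_mul (n : ℕ) (f : ℕ → ℕ → ℝ) :
    ∑ p ∈ antidiagonal (n + 1), (p.1 : ℝ) * f p.1 p.2 =
      ∑ p ∈ antidiagonal n, ((p.1 : ℝ) + 1) * f (p.1 + 1) p.2 := by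
  simp [Finset.Nat.sum_antidiagonal_succ]

theorem sum_antidiagonal_succ_snd_mul (n : ℕ) (f : ℕ → ℕ → ℝ) :
    ∑ p ∈ antidiagonal (n + 1), (p.2 : ℝ) * f p.1 p.2 =
      ∑ p ∈ antidiagonal n, ((p.2 : ℝ) + 1) * f p.1 (p.2 + 1) := by
  simp [Finset.Nat.sum_antidiagonal_succ']

theorem jacobi_eq_sum_antidiagonal (α β : ℝ) (n : ℕ) (x : ℝ) :
    jacobi α β n x = ∑ p ∈ antidiagonal n,
      genChoose (n + α) p.2 * genChoose (n + β) p.1 * ((x - 1) / 2) ^ p.1 * ((x + 1) / 2) ^ p.2 :=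
  (Finset.Nat.sum_antidiagonal_eq_sum_range_succ (fun s k => genChoose (n + α) k *
    genChoose (n + β) s * ((x - 1) / 2) ^ s * ((x + 1) / 2) ^ k) n).symm

theorem jacobi_zero (α β x : ℝ) : jacobi α β 0 x = 1 := by
  simp [jacobi, genChoose]

theorem hasDerivAt_jacobi (α β : ℝ) (n : ℕ) (x : ℝ) :
    HasDerivAt (jacobi α β n)
      (∑ p ∈ antidiagonal n, genChoose (n + α) p.2 * genChoose (n + β) p.1 / 2 *
        (p.1 * ((x - 1) / 2) ^ (p.1 - 1) * ((x + 1) / 2) ^ p.2 +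
          p.2 * ((x - 1) / 2) ^ p.1 * ((x + 1) / 2) ^ (p.2 - 1))) x := by
  rw [funext (jacobi_eq_sum_antidiagonal α β n)]
  refine HasDerivAt.fun_sum fun p _ => ?_
  have hX : HasDerivAt (fun x : ℝ => (x - 1) / 2) (1 / 2) x :=
    ((hasDerivAt_id x).sub_const 1).div_const 2
  have hY : HasDerivAt (fun x : ℝ => (x + 1) / 2) (1 / 2) x :=
    ((hasDerivAt_id x).add_const 1).div_const 2
  refine (((hX.fun_pow p.1).const_mul _).fun_mul (hY.fun_pow p.2)).congr_deriv ?_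
  ring

theorem differentiable_jacobi (α β : ℝ) (n : ℕ) : Differentiable ℝ (jacobi α β n) :=
  fun x => (hasDerivAt_jacobi α β n x).differentiableAt

theorem deriv_jacobi_succ (α β : ℝ) (n : ℕ) (x : ℝ) :
    deriv (jacobi α β (n + 1)) x = (n + 2 + α + β) / 2 * jacobi (α + 1) (β + 1) n x := by
  rw [(hasDerivAt_jacobi α β (n + 1) x).deriv, jacobi_eq_sum_antidiagonal, Finset.mul_sum]
  set X := (x - 1) / 2
  set Y := (x + 1) / 2
  have hfst := sum_antidiagonal_succ_fst_mul n fun s k =>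
    genChoose ((n + 1 : ℕ) + α) k * genChoose ((n + 1 : ℕ) + β) s / 2 * (X ^ (s - 1) * Y ^ k)
  have hsnd := sum_antidiagonal_succ_snd_mul n fun s k =>
    genChoose ((n + 1 : ℕ) + α) k * genChoose ((n + 1 : ℕ) + β) s / 2 * (X ^ s * Y ^ (k - 1))
  calc _ = _ := by
        rw [← Finset.sum_add_distrib]
        exact Finset.sum_congr rfl fun p _ => by ring
    _ = _ := congrArg₂ (· + ·) hfst hsnd
    _ = _ := by
        rw [← Finset.sum_add_distrib]
        refine Finset.sum_congr rfl fun p hp => ?_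
        obtain rfl : p.1 + p.2 = n := mem_antidiagonal.1 hp
        have hA := succ_mul_genChoose_succ ((p.1 + p.2 + 1 : ℕ) + α) p.2
        have hB := succ_mul_genChoose_succ ((p.1 + p.2 + 1 : ℕ) + β) p.1
        have eα : ((p.1 + p.2 : ℕ) : ℝ) + (α + 1) = (p.1 + p.2 + 1 : ℕ) + α := by push_cast; ring
        have eβ : ((p.1 + p.2 : ℕ) : ℝ) + (β + 1) = (p.1 + p.2 + 1 : ℕ) + β := by push_cast; ring
        rw [eα, eβ, Nat.add_sub_cancel, Nat.add_sub_cancel]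
        push_cast at hA hB ⊢
        linear_combination X ^ p.1 * Y ^ p.2 / 2 *
          (genChoose (p.1 + p.2 + 1 + α) p.2 * hB + genChoose (p.1 + p.2 + 1 + β) p.1 * hA)

theorem one_sub_sq_mul_deriv_jacobi (α β : ℝ) (n : ℕ) (x : ℝ) :
    (1 - x ^ 2) * deriv (jacobi α β n) x =
      -2 * ∑ p ∈ antidiagonal n, genChoose (n + α) p.2 * genChoose (n + β) p.1 *
        (p.1 * ((x + 1) / 2) + p.2 * ((x - 1) / 2)) *
          (((x - 1) / 2) ^ p.1 * ((x + 1) / 2) ^ p.2) := by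
  have mul_pow_pred (X : ℝ) (k : ℕ) : X * (k * X ^ (k - 1)) = k * X ^ k := by
    cases k with
    | zero => simp
    | succ k => rw [Nat.add_sub_cancel]; ring
  rw [(hasDerivAt_jacobi α β n x).deriv, Finset.mul_sum, Finset.mul_sum]
  refine Finset.sum_congr rfl fun p _ => ?_
  have hX := mul_pow_pred ((x - 1) / 2) p.1
  have hY := mul_pow_pred ((x + 1) / 2) p.2
  have hφ : 1 - x ^ 2 = -4 * ((x - 1) / 2 * ((x + 1) / 2)) := by ring
  rw [hφ]
  linear_combination -2 * genChoose (n + α) p.2 * genChoose (n + β) p.1 *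
    (((x + 1) / 2) ^ (p.2 + 1) * hX + ((x - 1) / 2) ^ (p.1 + 1) * hY)

theorem jacobi_raising (α β : ℝ) (n : ℕ) (x : ℝ) :
    (1 - x ^ 2) * deriv (jacobi (α + 1) (β + 1) n) x +
        (β - α - (α + β + 2) * x) * jacobi (α + 1) (β + 1) n x =
      -2 * (n + 1) * jacobi α β (n + 1) x := by
  set X := (x - 1) / 2 with hX
  set Y := (x + 1) / 2 with hY
  have hfst := sum_antidiagonal_succ_fst_mul n fun s k =>
    genChoose ((n + 1 : ℕ) + α) k * genChoose ((n + 1 : ℕ) + β) s * (X ^ s * Y ^ k)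
  have hsnd := sum_antidiagonal_succ_snd_mul n fun s k =>
    genChoose ((n + 1 : ℕ) + α) k * genChoose ((n + 1 : ℕ) + β) s * (X ^ s * Y ^ k)
  have hdeg : (n + 1) * jacobi α β (n + 1) x =
      ∑ p ∈ antidiagonal n, ((p.1 : ℝ) + 1) * (genChoose ((n + 1 : ℕ) + α) p.2 *
        genChoose ((n + 1 : ℕ) + β) (p.1 + 1) * (X ^ (p.1 + 1) * Y ^ p.2)) +
      ∑ p ∈ antidiagonal n, ((p.2 : ℝ) + 1) * (genChoose ((n + 1 : ℕ) + α) (p.2 + 1) *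
        genChoose ((n + 1 : ℕ) + β) p.1 * (X ^ p.1 * Y ^ (p.2 + 1))) := by
    rw [← hfst, ← hsnd, ← Finset.sum_add_distrib, jacobi_eq_sum_antidiagonal, Finset.mul_sum]
    refine Finset.sum_congr rfl fun p hp => ?_
    have hp' : (p.1 : ℝ) + p.2 = n + 1 := by exact_mod_cast mem_antidiagonal.1 hp
    rw [← hp']
    ring
  have hcoef : β - α - (α + β + 2) * x = -2 * ((α + 1) * Y + (β + 1) * X) := by
    rw [hX, hY]; ring
  rw [one_sub_sq_mul_deriv_jacobi, mul_assoc, hdeg, hcoef, jacobi_eq_sum_antidiagonal, mul_assoc,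
    ← mul_add, Finset.mul_sum, ← Finset.sum_add_distrib, ← Finset.sum_add_distrib]
  refine congrArg _ (Finset.sum_congr rfl fun p hp => ?_)
  obtain rfl : p.1 + p.2 = n := mem_antidiagonal.1 hp
  have hA := succ_mul_genChoose_succ ((p.1 + p.2 + 1 : ℕ) + α) p.2
  have hB := succ_mul_genChoose_succ ((p.1 + p.2 + 1 : ℕ) + β) p.1
  have eα : ((p.1 + p.2 : ℕ) : ℝ) + (α + 1) = (p.1 + p.2 + 1 : ℕ) + α := by push_cast; ring
  have eβ : ((p.1 + p.2 : ℕ) : ℝ) + (β + 1) = (p.1 + p.2 + 1 : ℕ) + β := by push_cast; ring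
  rw [eα, eβ]
  push_cast at hA hB ⊢
  linear_combination -X ^ p.1 * Y ^ p.2 *
    (X * genChoose (p.1 + p.2 + 1 + α) p.2 * hB + Y * genChoose (p.1 + p.2 + 1 + β) p.1 * hA)

theorem differentiable_deriv_jacobi (α β : ℝ) (n : ℕ) :
    Differentiable ℝ (deriv (jacobi α β n)) := by
  cases n with
  | zero => simp [funext (jacobi_zero α β)]
  | succ n =>
    rw [funext (deriv_jacobi_succ α β n)]
    exact (differentiable_jacobi (α + 1) (β + 1) n).const_mul _

theorem jacobi_differential_equation (α β : ℝ) (n : ℕ) (x : ℝ) :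
    (1 - x ^ 2) * deriv (deriv (jacobi α β n)) x +
        (β - α - (α + β + 2) * x) * deriv (jacobi α β n) x +
      n * (n + α + β + 1) * jacobi α β n x = 0 := by
  cases n with
  | zero => simp [funext (jacobi_zero α β)]
  | succ n =>
    have hderiv := funext (deriv_jacobi_succ α β n)
    rw [hderiv, deriv_const_mul _ (differentiable_jacobi (α + 1) (β + 1) n x)]
    push_cast
    linear_combination (n + 2 + α + β) / 2 * jacobi_raising α β n x

theorem one_sub_sq_pos {x : ℝ} (hx : x ∈ Set.Ioo (-1 : ℝ) 1) : 0 < 1 - x ^ 2 := by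
  nlinarith [hx.1, hx.2]

/-- The Jacobi weight `(1-x)^α (1+x)^β`, with respect to which the polynomials `jacobi α β n` are
orthogonal on `[-1, 1]`. -/
noncomputable def jacobiWeight (α β x : ℝ) : ℝ := (1 - x) ^ α * (1 + x) ^ β

theorem jacobiWeight_nonneg (α β : ℝ) {x : ℝ} (hx : x ∈ Set.Icc (-1 : ℝ) 1) :
    0 ≤ jacobiWeight α β x :=
  mul_nonneg (Real.rpow_nonneg (by linarith [hx.2]) _) (Real.rpow_nonneg (by linarith [hx.1]) _)

theorem continuous_jacobiWeight {α β : ℝ} (hα : 0 ≤ α) (hβ : 0 ≤ β) :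
    Continuous (jacobiWeight α β) :=
  ((continuous_const.sub continuous_id).rpow_const fun _ => Or.inr hα).mul
    ((continuous_const.add continuous_id).rpow_const fun _ => Or.inr hβ)

theorem hasDerivAt_jacobiWeight (α β : ℝ) {x : ℝ} (hx : x ∈ Set.Ioo (-1 : ℝ) 1) :
    HasDerivAt (jacobiWeight α β)
      (jacobiWeight α β x * (β - α - (α + β) * x) / (1 - x ^ 2)) x := by
  have h1 : 0 < 1 - x := by linarith [hx.2]
  have h2 : 0 < 1 + x := by linarith [hx.1]
  have d1 : HasDerivAt (fun x : ℝ => 1 - x) (-1) x := (hasDerivAt_id x).const_sub 1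
  have d2 : HasDerivAt (fun x : ℝ => 1 + x) 1 x := (hasDerivAt_id x).const_add 1
  refine ((d1.rpow_const (p := α) (Or.inl h1.ne')).fun_mul
    (d2.rpow_const (p := β) (Or.inl h2.ne'))).congr_deriv ?_
  have hφ : 1 - x ^ 2 = (1 - x) * (1 + x) := by ring
  rw [Real.rpow_sub_one h1.ne', Real.rpow_sub_one h2.ne', jacobiWeight, hφ]
  field_simp
  ring

theorem jacobiWeight_add_one (α β : ℝ) {x : ℝ} (hx : x ∈ Set.Ioo (-1 : ℝ) 1) :
    jacobiWeight (α + 1) (β + 1) x = (1 - x ^ 2) * jacobiWeight α β x := by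
  have h1 : 1 - x ≠ 0 := by linarith [hx.2]
  have h2 : 1 + x ≠ 0 := by linarith [hx.1]
  rw [jacobiWeight, jacobiWeight, Real.rpow_add_one h1, Real.rpow_add_one h2]
  ring

theorem hasDerivAt_jacobiWeight_mul_jacobi (α β : ℝ) (n : ℕ) {x : ℝ}
    (hx : x ∈ Set.Ioo (-1 : ℝ) 1) :
    HasDerivAt (fun x => jacobiWeight (α + 1) (β + 1) x * jacobi (α + 1) (β + 1) n x)
      (-2 * (n + 1) * (jacobiWeight α β x * jacobi α β (n + 1) x)) x := by
  have hφ := (one_sub_sq_pos hx).ne'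
  refine ((hasDerivAt_jacobiWeight (α + 1) (β + 1) hx).fun_mul
    (differentiable_jacobi (α + 1) (β + 1) n x).hasDerivAt).congr_deriv ?_
  rw [jacobiWeight_add_one α β hx]
  field_simp
  linear_combination jacobiWeight α β x * jacobi_raising α β n x

/-- The squared norm of `jacobi α β n` in the space `L²` of the weight `jacobiWeight α β`. -/
noncomputable def jacobiNormSq (α β : ℝ) (n : ℕ) : ℝ :=
  ∫ x in (-1 : ℝ)..1, jacobiWeight α β x * jacobi α β n x ^ 2

theorem jacobiNormSq_succ {α β : ℝ} (hα : 0 ≤ α) (hβ : 0 ≤ β) (n : ℕ) :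
    4 * (n + 1) * jacobiNormSq α β (n + 1) =
      (n + 2 + α + β) * jacobiNormSq (α + 1) (β + 1) n := by
  have hα' : 0 < α + 1 := by linarith
  have hβ' : 0 < β + 1 := by linarith
  have hwP := (continuous_jacobiWeight hα hβ).mul (differentiable_jacobi α β (n + 1)).continuous
  have parts := intervalIntegral.integral_mul_deriv_eq_deriv_mul_of_hasDerivAt
    (a := -1) (b := 1) (differentiable_jacobi α β (n + 1)).continuous.continuousOn
    ((continuous_jacobiWeight hα'.le hβ'.le).mul
      (differentiable_jacobi (α + 1) (β + 1) n).continuous).continuousOn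
    (fun x _ => (differentiable_jacobi α β (n + 1) x).hasDerivAt)
    (fun x hx => hasDerivAt_jacobiWeight_mul_jacobi α β n (by simpa using hx))
    (by
      rw [funext (deriv_jacobi_succ α β n)]
      exact ((differentiable_jacobi _ _ n).continuous.const_mul _).intervalIntegrable _ _)
    ((hwP.const_mul _).intervalIntegrable _ _)
  have hleft (x : ℝ) : jacobi α β (n + 1) x *
      (-2 * (n + 1) * (jacobiWeight α β x * jacobi α β (n + 1) x)) =
      -2 * (n + 1) * (jacobiWeight α β x * jacobi α β (n + 1) x ^ 2) := by ring
  have hright (x : ℝ) : deriv (jacobi α β (n + 1)) x *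
      (jacobiWeight (α + 1) (β + 1) x * jacobi (α + 1) (β + 1) n x) =
      (n + 2 + α + β) / 2 *
        (jacobiWeight (α + 1) (β + 1) x * jacobi (α + 1) (β + 1) n x ^ 2) := by
    rw [deriv_jacobi_succ]; ring
  have h1 : jacobiWeight (α + 1) (β + 1) 1 = 0 := by
    rw [jacobiWeight, sub_self, Real.zero_rpow hα'.ne', zero_mul]
  have h2 : jacobiWeight (α + 1) (β + 1) (-1) = 0 := by
    rw [jacobiWeight, add_neg_cancel, Real.zero_rpow hβ'.ne', mul_zero]
  simp only [Pi.mul_apply, hleft, hright, intervalIntegral.integral_const_mul, h1, h2] at parts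
  rw [jacobiNormSq, jacobiNormSq]
  linear_combination (-2) * parts

theorem integral_rpow_mul_one_sub_rpow {α β : ℝ} (hα : -1 < α) (hβ : -1 < β) :
    ∫ x in (0 : ℝ)..1, x ^ α * (1 - x) ^ β =
      Real.Gamma (α + 1) * Real.Gamma (β + 1) / Real.Gamma (α + β + 2) := by
  have hbeta := ProbabilityTheory.beta_eq_betaIntegralReal (α + 1) (β + 1)
    (by linarith) (by linarith)
  have hsum : α + 1 + (β + 1) = α + β + 2 := by ring
  rw [ProbabilityTheory.beta, hsum] at hbeta
  rw [hbeta, Complex.betaIntegral, ← Complex.ofReal_re (∫ x in (0 : ℝ)..1, x ^ α * (1 - x) ^ β),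
    ← intervalIntegral.integral_ofReal]
  refine congrArg Complex.re (intervalIntegral.integral_congr fun x hx => ?_)
  rw [Set.uIcc_of_le zero_le_one] at hx
  simp only [Complex.ofReal_add, Complex.ofReal_one, add_sub_cancel_right]
  rw [Complex.ofReal_mul, Complex.ofReal_cpow hx.1, Complex.ofReal_cpow (by linarith [hx.2]),
    Complex.ofReal_sub, Complex.ofReal_one]

theorem integral_jacobiWeight {α β : ℝ} (hα : -1 < α) (hβ : -1 < β) :
    ∫ x in (-1 : ℝ)..1, jacobiWeight α β x =
      2 ^ (α + β + 1) * (Real.Gamma (α + 1) * Real.Gamma (β + 1) / Real.Gamma (α + β + 2)) := by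
  have hscale : ∀ x ∈ Set.uIcc (0 : ℝ) 1, jacobiWeight α β (1 - 2 * x) =
      2 ^ (α + β) * (x ^ α * (1 - x) ^ β) := by
    intro x hx
    rw [Set.uIcc_of_le zero_le_one] at hx
    have e1 : 1 - (1 - 2 * x) = 2 * x := by ring
    have e2 : 1 + (1 - 2 * x) = 2 * (1 - x) := by ring
    rw [jacobiWeight, e1, e2, Real.mul_rpow two_pos.le hx.1,
      Real.mul_rpow two_pos.le (by linarith [hx.2]), Real.rpow_add two_pos]
    ring
  have hsubst := intervalIntegral.integral_comp_sub_mul (jacobiWeight α β) (a := 0) (b := 1)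
    (c := 2) two_ne_zero 1
  rw [intervalIntegral.integral_congr hscale, intervalIntegral.integral_const_mul,
    integral_rpow_mul_one_sub_rpow hα hβ, smul_eq_mul] at hsubst
  norm_num at hsubst
  rw [Real.rpow_add_one two_ne_zero]
  linear_combination (-2) * hsubst

theorem jacobiNormSq_zero {α β : ℝ} (hα : -1 < α) (hβ : -1 < β) :
    jacobiNormSq α β 0 =
      2 ^ (α + β + 1) * (Real.Gamma (α + 1) * Real.Gamma (β + 1) / Real.Gamma (α + β + 2)) := by
  simp only [jacobiNormSq, jacobi_zero, one_pow, mul_one]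
  exact integral_jacobiWeight hα hβ

theorem jacobiNormSq_eq {α β : ℝ} (hα : 0 ≤ α) (hβ : 0 ≤ β) (n : ℕ) :
    jacobiNormSq α β n = 2 ^ (α + β + 1) / (2 * n + α + β + 1) *
      (Real.Gamma (n + α + 1) * Real.Gamma (n + β + 1) /
        (Real.Gamma (n + 1) * Real.Gamma (n + α + β + 1))) := by
  induction n generalizing α β with
  | zero =>
    have hs : α + β + 1 ≠ 0 := by positivity
    have hΓ := (Real.Gamma_pos_of_pos (show 0 < α + β + 1 by positivity)).ne'
    have e : α + β + 2 = α + β + 1 + 1 := by ring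
    rw [jacobiNormSq_zero (by linarith) (by linarith), e, Real.Gamma_add_one hs]
    simp only [Nat.cast_zero, zero_add, mul_zero, Real.Gamma_one, one_mul]
    field_simp
  | succ n ih =>
    have hs : (n : ℝ) + α + β + 2 ≠ 0 := by positivity
    have hn : (n : ℝ) + 1 ≠ 0 := by positivity
    have hΓ := (Real.Gamma_pos_of_pos (show 0 < (n : ℝ) + α + β + 2 by positivity)).ne'
    have hΓ' := (Real.Gamma_pos_of_pos (show 0 < (n : ℝ) + 1 by positivity)).ne'
    have e1 : (n : ℝ) + (α + 1) + (β + 1) + 1 = n + α + β + 2 + 1 := by ring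
    have e2 : α + 1 + (β + 1) + 1 = α + β + 1 + 1 + 1 := by ring
    have e3 : (n : ℝ) + 1 + α + β + 1 = n + α + β + 2 := by ring
    have e4 : (n : ℝ) + (α + 1) + 1 = n + 1 + α + 1 := by ring
    have e5 : (n : ℝ) + (β + 1) + 1 = n + 1 + β + 1 := by ring
    have hsucc := jacobiNormSq_succ hα hβ n
    rw [ih (add_nonneg hα zero_le_one) (add_nonneg hβ zero_le_one), e1, Real.Gamma_add_one hs,
      e2, Real.rpow_add_one two_ne_zero, Real.rpow_add_one two_ne_zero, e4, e5] at hsucc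
    push_cast
    rw [Real.Gamma_add_one hn, e3]
    apply mul_left_cancel₀ (show 4 * ((n : ℝ) + 1) ≠ 0 by positivity)
    rw [hsucc]
    field_simp
    ring

/-- `IsJetOn h s` says that `h k` is the `k`-th derivative of `h 0` on `s`. The jet `h` is the
multiplier of the identity `IsLegendreSolution.integral_sq_mul_source`. -/
def IsJetOn (h : ℕ → ℝ → ℝ) (s : Set ℝ) : Prop :=
  ∀ k, ∀ x ∈ s, HasDerivAt (h k) (h (k + 1) x) x

theorem IsJetOn.continuousOn {h : ℕ → ℝ → ℝ} {s : Set ℝ} (hh : IsJetOn h s) (k : ℕ) :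
    ContinuousOn (h k) s :=
  fun x hx => (hh k x hx).continuousAt.continuousWithinAt

/-- The affine function `x ↦ p + κ x` together with its derivatives. -/
def affineJet (p κ : ℝ) : ℕ → ℝ → ℝ
  | 0, x => p + κ * x
  | 1, _ => κ
  | _ + 2, _ => 0

theorem isJetOn_affineJet (p κ : ℝ) (s : Set ℝ) : IsJetOn (affineJet p κ) s
  | 0, x, _ => (((hasDerivAt_id x).const_mul κ).const_add p).congr_deriv (mul_one κ)
  | 1, x, _ => hasDerivAt_const x κ
  | _ + 2, x, _ => hasDerivAt_const x 0

/-- The function `x ↦ (a - x)^(-1/2)` together with its derivatives on `x < a`. -/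
noncomputable def invSqrtJet (a : ℝ) (k : ℕ) (x : ℝ) : ℝ :=
  (∏ i ∈ Finset.range k, ((i : ℝ) + 1 / 2)) / √(a - x) ^ (2 * k + 1)

theorem isJetOn_invSqrtJet {a : ℝ} {s : Set ℝ} (hs : ∀ x ∈ s, x < a) :
    IsJetOn (invSqrtJet a) s := by
  intro k x hx
  have ht : 0 < a - x := sub_pos.2 (hs x hx)
  have hr : √(a - x) ≠ 0 := (Real.sqrt_pos.2 ht).ne'
  have hsqrt : HasDerivAt (fun x => √(a - x)) (-1 / (2 * √(a - x))) x :=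
    ((hasDerivAt_id x).const_sub a).sqrt ht.ne'
  refine ((hasDerivAt_const x (∏ i ∈ Finset.range k, ((i : ℝ) + 1 / 2))).fun_div
    (hsqrt.fun_pow (2 * k + 1)) (pow_ne_zero _ hr)).congr_deriv ?_
  rw [invSqrtJet, Finset.prod_range_succ, Nat.add_sub_cancel]
  generalize ∏ i ∈ Finset.range k, ((i : ℝ) + 1 / 2) = p
  generalize √(a - x) = r at hr
  push_cast
  field_simp
  ring

/-- The potential with turning points `c - R` and `c + R`. -/
def turningPotential (K c R x : ℝ) : ℝ := K * (R ^ 2 - (x - c) ^ 2)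

theorem contDiff_turningPotential (K c R : ℝ) : ContDiff ℝ 1 (turningPotential K c R) := by
  unfold turningPotential
  fun_prop

theorem deriv_turningPotential (K c R x : ℝ) :
    deriv (turningPotential K c R) x = -2 * K * (x - c) := by
  have h := (((((hasDerivAt_id' x).sub_const c).fun_pow 2).const_sub (R ^ 2)).const_mul K)
  refine (h.congr_deriv ?_).deriv
  ring

/-- Solutions of the first order system `2(1-x²) z' = ζ`, `2(1-x²) ζ' = -T z` on `(-1, 1)` which are
regular at both ends of the interval. Equivalently, `z` solves the generalized Legendre equation
`((1-x²) z')' + T/(4(1-x²)) z = 0`. -/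
structure IsLegendreSolution (T z ζ : ℝ → ℝ) : Prop where
  continuousOn_fst : ContinuousOn z (Set.Icc (-1) 1)
  continuousOn_snd : ContinuousOn ζ (Set.Icc (-1) 1)
  hasDerivAt_fst : ∀ x ∈ Set.Ioo (-1 : ℝ) 1, HasDerivAt z (ζ x / (2 * (1 - x ^ 2))) x
  hasDerivAt_snd : ∀ x ∈ Set.Ioo (-1 : ℝ) 1, HasDerivAt ζ (-(T x * z x) / (2 * (1 - x ^ 2))) x
  potential_mul_one : T 1 * z 1 = 0
  potential_mul_neg_one : T (-1) * z (-1) = 0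
  snd_one : ζ 1 = 0
  snd_neg_one : ζ (-1) = 0

/-- The quadratic form in `(z, ζ)` whose derivative along a solution is `legendreSource` times
`z²`. -/
noncomputable def legendreFlux (T z ζ : ℝ → ℝ) (h : ℕ → ℝ → ℝ) (x : ℝ) : ℝ :=
  h 0 x * (T x * z x ^ 2 + ζ x ^ 2) / 2 - (1 - x ^ 2) * h 1 x * (z x * (ζ x + 2 * x * z x)) +
    (1 - x ^ 2) ^ 2 * h 2 x * z x ^ 2

/-- The adjoint of the third order equation satisfied by the squares of solutions, applied to the
multiplier `h`. -/
noncomputable def legendreSource (T : ℝ → ℝ) (h : ℕ → ℝ → ℝ) (x : ℝ) : ℝ :=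
  (1 - x ^ 2) ^ 2 * h 3 x - 6 * x * (1 - x ^ 2) * h 2 x + (T x - 2 + 6 * x ^ 2) * h 1 x +
    deriv T x / 2 * h 0 x

namespace IsLegendreSolution

section Multiplier

variable {T z ζ : ℝ → ℝ} {h : ℕ → ℝ → ℝ} {a b x : ℝ}

theorem reflect (H : IsLegendreSolution T z ζ) :
    IsLegendreSolution (fun x => T (-x)) (fun x => z (-x)) (fun x => -ζ (-x)) where
  continuousOn_fst := H.continuousOn_fst.comp continuousOn_neg fun x hx =>
    ⟨neg_le_neg hx.2, neg_le.1 hx.1⟩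
  continuousOn_snd := (H.continuousOn_snd.comp continuousOn_neg fun x hx =>
    ⟨neg_le_neg hx.2, neg_le.1 hx.1⟩).neg
  hasDerivAt_fst x hx := by
    refine ((H.hasDerivAt_fst (-x) ⟨neg_lt_neg hx.2, neg_lt.1 hx.1⟩).comp x
      (hasDerivAt_neg x)).congr_deriv ?_
    rw [neg_sq]; ring
  hasDerivAt_snd x hx := by
    refine ((H.hasDerivAt_snd (-x) ⟨neg_lt_neg hx.2, neg_lt.1 hx.1⟩).comp x
      (hasDerivAt_neg x)).neg.congr_deriv ?_
    rw [neg_sq]; ring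
  potential_mul_one := H.potential_mul_neg_one
  potential_mul_neg_one := by rw [neg_neg]; exact H.potential_mul_one
  snd_one := by rw [H.snd_neg_one, neg_zero]
  snd_neg_one := by rw [neg_neg, H.snd_one, neg_zero]

theorem hasDerivAt_flux (H : IsLegendreSolution T z ζ) (hT : DifferentiableAt ℝ T x)
    (hh : IsJetOn h {x}) (hx : x ∈ Set.Ioo (-1 : ℝ) 1) :
    HasDerivAt (legendreFlux T z ζ h) (z x ^ 2 * legendreSource T h x) x := by
  have hφ0 := (one_sub_sq_pos hx).ne'
  have hz := H.hasDerivAt_fst x hx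
  have hζ := H.hasDerivAt_snd x hx
  have hφ : HasDerivAt (fun x : ℝ => 1 - x ^ 2) (-(2 * x)) x := by
    simpa using (hasDerivAt_pow 2 x).const_sub 1
  have henergy := (((hh 0 x rfl).fun_mul
    ((hT.hasDerivAt.fun_mul (hz.fun_pow 2)).fun_add (hζ.fun_pow 2))).div_const 2)
  have hcross := ((hφ.fun_mul (hh 1 x rfl)).fun_mul
    (hz.fun_mul (hζ.fun_add (((hasDerivAt_id' x).const_mul 2).fun_mul hz))))
  have hsquare := ((hφ.fun_pow 2).fun_mul (hh 2 x rfl)).fun_mul (hz.fun_pow 2)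
  refine ((henergy.fun_sub hcross).fun_add hsquare).congr_deriv ?_
  rw [legendreSource]
  field_simp
  ring

theorem continuousOn_sq_mul_source (H : IsLegendreSolution T z ζ) (hT : ContDiff ℝ 1 T)
    (hh : IsJetOn h (Set.Icc a b)) (ha : -1 ≤ a) (hb : b ≤ 1) :
    ContinuousOn (fun x => z x ^ 2 * legendreSource T h x) (Set.Icc a b) := by
  have hz := H.continuousOn_fst.mono (Set.Icc_subset_Icc ha hb)
  have hT0 := hT.continuous.continuousOn (s := Set.Icc a b)
  have hT1 := hT.continuous_deriv_one.continuousOn (s := Set.Icc a b)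
  have h0 := hh.continuousOn 0
  have h1 := hh.continuousOn 1
  have h2 := hh.continuousOn 2
  have h3 := hh.continuousOn 3
  unfold legendreSource
  fun_prop

theorem integral_sq_mul_source (H : IsLegendreSolution T z ζ) (hT : ContDiff ℝ 1 T)
    (hh : IsJetOn h (Set.Icc a b)) (ha : -1 ≤ a) (hab : a ≤ b) (hb : b ≤ 1) :
    ∫ x in a..b, z x ^ 2 * legendreSource T h x =
      legendreFlux T z ζ h b - legendreFlux T z ζ h a := by
  have hz := H.continuousOn_fst.mono (Set.Icc_subset_Icc ha hb)
  have hζ := H.continuousOn_snd.mono (Set.Icc_subset_Icc ha hb)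
  have hT0 := hT.continuous.continuousOn (s := Set.Icc a b)
  have h0 := hh.continuousOn 0
  have h1 := hh.continuousOn 1
  have h2 := hh.continuousOn 2
  refine intervalIntegral.integral_eq_sub_of_hasDerivAt_of_le hab
    (by unfold legendreFlux; fun_prop) (fun x hx => ?_)
    ((H.continuousOn_sq_mul_source hT hh ha hb).intervalIntegrable_of_Icc hab)
  refine H.hasDerivAt_flux (hT.differentiable one_ne_zero x) (fun k y hy => ?_)
    ⟨ha.trans_lt hx.1, hx.2.trans_le hb⟩
  rw [hy]
  exact hh k x (Set.Ioo_subset_Icc_self hx)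

theorem flux_one (H : IsLegendreSolution T z ζ) (h : ℕ → ℝ → ℝ) :
    legendreFlux T z ζ h 1 = 0 := by
  rw [legendreFlux, H.snd_one]
  linear_combination h 0 1 * z 1 / 2 * H.potential_mul_one

theorem flux_neg_one (H : IsLegendreSolution T z ζ) (h : ℕ → ℝ → ℝ) :
    legendreFlux T z ζ h (-1) = 0 := by
  rw [legendreFlux, H.snd_neg_one]
  linear_combination h 0 (-1) * z (-1) / 2 * H.potential_mul_neg_one

theorem flux_of_critical (h : ℕ → ℝ → ℝ) (hcrit : ζ x = x * z x) :
    legendreFlux T z ζ h x = z x ^ 2 * (h 0 x * (T x + x ^ 2) / 2 -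
      3 * x * (1 - x ^ 2) * h 1 x + (1 - x ^ 2) ^ 2 * h 2 x) := by
  rw [legendreFlux, hcrit]
  ring

theorem snd_eq_of_isLocalMax (H : IsLegendreSolution T z ζ) (hx : x ∈ Set.Ioo (-1 : ℝ) 1)
    (hz : z x ≠ 0) (hmax : IsLocalMax (fun x => (1 - x ^ 2) * z x ^ 4) x) : ζ x = x * z x := by
  have hφ0 := (one_sub_sq_pos hx).ne'
  have hφ : HasDerivAt (fun x : ℝ => 1 - x ^ 2) (-(2 * x)) x := by
    simpa using (hasDerivAt_pow 2 x).const_sub 1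
  have hderiv := hmax.hasDerivAt_eq_zero (hφ.fun_mul ((H.hasDerivAt_fst x hx).fun_pow 4))
  have hfactor : 2 * z x ^ 3 * (ζ x - x * z x) = 0 := by
    rw [← hderiv]
    field_simp
    push_cast
    ring
  have := (mul_eq_zero.1 hfactor).resolve_left (mul_ne_zero two_ne_zero (pow_ne_zero 3 hz))
  linarith

end Multiplier

section TurningPotential

variable {K c R δ x₀ : ℝ} {z ζ : ℝ → ℝ}

theorem integral_sq_mul_sq_sub_le (H : IsLegendreSolution (turningPotential K c R) z ζ) :
    2 * K * ∫ x in (-1 : ℝ)..1, z x ^ 2 * (x - c) ^ 2 ≤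
      (K * R ^ 2 + 4) * ∫ x in (-1 : ℝ)..1, z x ^ 2 := by
  have hT := contDiff_turningPotential K c R
  have hjet := isJetOn_affineJet (-c) 1 (Set.Icc (-1) 1)
  have hz := H.continuousOn_fst
  have h01 : (-1 : ℝ) ≤ 1 := by norm_num
  have hint : IntervalIntegrable (fun x => z x ^ 2) MeasureTheory.volume (-1) 1 :=
    (hz.pow 2).intervalIntegrable_of_Icc h01
  have hint' : IntervalIntegrable (fun x => z x ^ 2 * (x - c) ^ 2) MeasureTheory.volume (-1) 1 :=
    ((hz.pow 2).mul (by fun_prop)).intervalIntegrable_of_Icc h01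
  have hmono : ∫ x in (-1 : ℝ)..1,
        z x ^ 2 * legendreSource (turningPotential K c R) (affineJet (-c) 1) x ≤
      ∫ x in (-1 : ℝ)..1, ((K * R ^ 2 + 4) * z x ^ 2 - 2 * K * (z x ^ 2 * (x - c) ^ 2)) := by
    refine intervalIntegral.integral_mono_on h01
      ((H.continuousOn_sq_mul_source hT hjet le_rfl le_rfl).intervalIntegrable_of_Icc h01)
      ((hint.const_mul _).sub (hint'.const_mul _)) fun x hx => ?_
    have hx2 : x ^ 2 ≤ 1 := by nlinarith [hx.1, hx.2]
    simp only [legendreSource, deriv_turningPotential, turningPotential, affineJet]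
    nlinarith [mul_le_mul_of_nonneg_left hx2 (sq_nonneg (z x))]
  rw [H.integral_sq_mul_source hT hjet le_rfl h01 le_rfl, H.flux_one, H.flux_neg_one,
    intervalIntegral.integral_sub (hint.const_mul _) (hint'.const_mul _),
    intervalIntegral.integral_const_mul, intervalIntegral.integral_const_mul] at hmono
  linarith

theorem flux_affineJet_nonneg (H : IsLegendreSolution (turningPotential K c R) z ζ)
    (hK : 0 ≤ K) (hx₀ : x₀ ∈ Set.Icc (-1 : ℝ) 1) (hc : c ≤ x₀) {κ : ℝ} (hκ : 0 ≤ κ)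
    (hκK : κ * (turningPotential K c R x₀ + 4) ≤ K * (x₀ - c)) :
    0 ≤ legendreFlux (turningPotential K c R) z ζ (affineJet (1 - κ * x₀) κ) x₀ := by
  have hsource : ∫ x in x₀..1, -(z x ^ 2 *
      legendreSource (turningPotential K c R) (affineJet (1 - κ * x₀) κ) x) =
      legendreFlux (turningPotential K c R) z ζ (affineJet (1 - κ * x₀) κ) x₀ := by
    rw [intervalIntegral.integral_neg, H.integral_sq_mul_source (contDiff_turningPotential K c R)
      (isJetOn_affineJet _ _ _) hx₀.1 hx₀.2 le_rfl, H.flux_one, zero_sub, neg_neg]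
  rw [← hsource]
  refine intervalIntegral.integral_nonneg hx₀.2 fun x hx => ?_
  rw [← mul_neg]
  refine mul_nonneg (sq_nonneg _) (neg_nonneg.2 ?_)
  have hx2 : x ^ 2 ≤ 1 := by nlinarith [hx₀.1, hx.1, hx.2]
  have hT : turningPotential K c R x ≤ turningPotential K c R x₀ :=
    mul_le_mul_of_nonneg_left (by nlinarith [hx.1]) hK
  have hforce : K * (x₀ - c) ≤ K * (x - c) * (1 - κ * x₀ + κ * x) := by
    have hxc : x₀ - c ≤ x - c := by linarith [hx.1]
    have hh : 1 ≤ 1 - κ * x₀ + κ * x := by nlinarith [hx.1]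
    nlinarith [mul_nonneg hK (mul_nonneg (sub_nonneg.2 (hc.trans hx.1)) (sub_nonneg.2 hh)),
      mul_le_mul_of_nonneg_left hxc hK]
  have hκx : κ * (turningPotential K c R x - 2 + 6 * x ^ 2) ≤
      κ * (turningPotential K c R x₀ + 4) :=
    mul_le_mul_of_nonneg_left (by linarith) hκ
  simp only [legendreSource, deriv_turningPotential, affineJet]
  linarith

theorem mul_le_potential_add_sq (H : IsLegendreSolution (turningPotential K c R) z ζ)
    (hK : 0 ≤ K) (hx₀ : x₀ ∈ Set.Icc (-1 : ℝ) 1) (hc : c ≤ x₀) (hz : z x₀ ≠ 0)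
    (hcrit : ζ x₀ = x₀ * z x₀) {κ : ℝ} (hκ : 0 ≤ κ)
    (hκK : κ * (turningPotential K c R x₀ + 4) ≤ K * (x₀ - c)) :
    6 * x₀ * (1 - x₀ ^ 2) * κ ≤ turningPotential K c R x₀ + x₀ ^ 2 := by
  have hflux := H.flux_affineJet_nonneg hK hx₀ hc hκ hκK
  rw [flux_of_critical _ hcrit] at hflux
  have := nonneg_of_mul_nonneg_right hflux (by positivity)
  simp only [affineJet] at this
  linarith

theorem potential_add_sq_nonneg (H : IsLegendreSolution (turningPotential K c R) z ζ)
    (hK : 0 ≤ K) (hx₀ : x₀ ∈ Set.Icc (-1 : ℝ) 1) (hc : c ≤ x₀) (hz : z x₀ ≠ 0)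
    (hcrit : ζ x₀ = x₀ * z x₀) : 0 ≤ turningPotential K c R x₀ + x₀ ^ 2 := by
  have hκK : 0 * (turningPotential K c R x₀ + 4) ≤ K * (x₀ - c) := by
    rw [zero_mul]; exact mul_nonneg hK (sub_nonneg.2 hc)
  simpa using H.mul_le_potential_add_sq hK hx₀ hc hz hcrit le_rfl hκK

theorem mul_le_potential_mul (H : IsLegendreSolution (turningPotential K c R) z ζ)
    (hK : 0 ≤ K) (hx₀ : x₀ ∈ Set.Icc (-1 : ℝ) 1) (hc : c ≤ x₀) (hz : z x₀ ≠ 0)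
    (hcrit : ζ x₀ = x₀ * z x₀) :
    6 * x₀ * (1 - x₀ ^ 2) * (K * (x₀ - c)) ≤
      (turningPotential K c R x₀ + 4) * (turningPotential K c R x₀ + x₀ ^ 2) := by
  have hT := H.potential_add_sq_nonneg hK hx₀ hc hz hcrit
  have hT4 : 0 < turningPotential K c R x₀ + 4 := by nlinarith [hx₀.1, hx₀.2]
  have hκ : 0 ≤ K * (x₀ - c) / (turningPotential K c R x₀ + 4) :=
    div_nonneg (mul_nonneg hK (sub_nonneg.2 hc)) hT4.le
  have h := H.mul_le_potential_add_sq hK hx₀ hc hz hcrit hκ (div_mul_cancel₀ _ hT4.ne').le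
  rwa [← mul_div_assoc, div_le_iff₀' hT4] at h

-- Where `T ≤ 0` the product `z ζ` increases, but it vanishes at `1`.
theorem potential_pos_of_pos (H : IsLegendreSolution (turningPotential K c R) z ζ)
    (hK : 0 ≤ K) (hx₀ : x₀ ∈ Set.Ioc (0 : ℝ) 1) (hc : c ≤ x₀) (hz : z x₀ ≠ 0)
    (hcrit : ζ x₀ = x₀ * z x₀) : 0 < turningPotential K c R x₀ := by
  by_contra! hT₀
  have hsub : Set.Icc x₀ 1 ⊆ Set.Icc (-1 : ℝ) 1 := Set.Icc_subset_Icc_left (by linarith [hx₀.1])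
  have hmono : MonotoneOn (fun x => z x * ζ x) (Set.Icc x₀ 1) := by
    refine monotoneOn_of_hasDerivWithinAt_nonneg (convex_Icc x₀ 1)
      ((H.continuousOn_fst.mul H.continuousOn_snd).mono hsub)
      (f' := fun x => (ζ x ^ 2 - turningPotential K c R x * z x ^ 2) / (2 * (1 - x ^ 2)))
      (fun x hx => ?_) fun x hx => ?_
    all_goals
      rw [interior_Icc] at hx
      have hx' : x ∈ Set.Ioo (-1 : ℝ) 1 := ⟨by linarith [hx₀.1, hx.1], hx.2⟩
    · refine (((H.hasDerivAt_fst x hx').fun_mul (H.hasDerivAt_snd x hx')).congr_deriv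
        ?_).hasDerivWithinAt
      ring
    · have hT : turningPotential K c R x ≤ turningPotential K c R x₀ :=
        mul_le_mul_of_nonneg_left (by nlinarith [hx.1]) hK
      have := one_sub_sq_pos hx'
      exact div_nonneg (by nlinarith [sq_nonneg (z x), sq_nonneg (ζ x)]) (by positivity)
  have hle := hmono (Set.left_mem_Icc.2 hx₀.2) (Set.right_mem_Icc.2 hx₀.2) hx₀.2
  simp only [hcrit, H.snd_one, mul_zero] at hle
  have : 0 < x₀ * z x₀ ^ 2 := mul_pos hx₀.1 (by positivity)
  linarith

end TurningPotential

end IsLegendreSolution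

theorem sqrt_sub_le {ρ : ℝ} (hρ : 0 < ρ) (y : ℝ) :
    √(ρ - y) ≤ √ρ * (5 / 4 + y ^ 2 / (4 * ρ ^ 2)) := by
  have hamgm : √ρ * √(ρ - y) ≤ ρ * (5 / 4 + y ^ 2 / (4 * ρ ^ 2)) := by
    have hsplit : ρ * (5 / 4 + y ^ 2 / (4 * ρ ^ 2)) =
        (ρ + (ρ - y)) / 2 + (ρ + y) ^ 2 / (4 * ρ) := by field_simp; ring
    have hsq : 0 ≤ (ρ + y) ^ 2 / (4 * ρ) := by positivity
    rw [hsplit]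
    rcases le_total (ρ - y) 0 with h | h
    · rw [Real.sqrt_eq_zero_of_nonpos h, mul_zero, ← hsplit]
      positivity
    · linarith [sq_nonneg (√ρ - √(ρ - y)), Real.sq_sqrt hρ.le, Real.sq_sqrt h]
  refine le_of_mul_le_mul_left ?_ (Real.sqrt_pos.2 hρ)
  rwa [← mul_assoc, Real.mul_self_sqrt hρ.le]

theorem integral_sq_nonneg (z : ℝ → ℝ) : 0 ≤ ∫ x in (-1 : ℝ)..1, z x ^ 2 :=
  intervalIntegral.integral_nonneg (by norm_num) fun _ _ => sq_nonneg _

theorem integral_sq_mul_sqrt_le {z : ℝ → ℝ} (hz : ContinuousOn z (Set.Icc (-1) 1)) {c ρ : ℝ}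
    (hρ : 0 < ρ) (hmoment : ∫ x in (-1 : ℝ)..1, z x ^ 2 * (x - c) ^ 2 ≤
      ρ ^ 2 * ∫ x in (-1 : ℝ)..1, z x ^ 2) :
    ∫ x in (-1 : ℝ)..1, z x ^ 2 * √(c + ρ - x) ≤ 3 / 2 * √ρ * ∫ x in (-1 : ℝ)..1, z x ^ 2 := by
  have h01 : (-1 : ℝ) ≤ 1 := by norm_num
  have hint : IntervalIntegrable (fun x => z x ^ 2) MeasureTheory.volume (-1) 1 :=
    (hz.pow 2).intervalIntegrable_of_Icc h01
  have hint' : IntervalIntegrable (fun x => z x ^ 2 * (x - c) ^ 2) MeasureTheory.volume (-1) 1 :=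
    ((hz.pow 2).mul (by fun_prop)).intervalIntegrable_of_Icc h01
  calc ∫ x in (-1 : ℝ)..1, z x ^ 2 * √(c + ρ - x)
      ≤ ∫ x in (-1 : ℝ)..1, (√ρ * (5 / 4) * z x ^ 2 +
          √ρ / (4 * ρ ^ 2) * (z x ^ 2 * (x - c) ^ 2)) := by
        refine intervalIntegral.integral_mono_on h01
          (((hz.pow 2).mul (by fun_prop)).intervalIntegrable_of_Icc h01)
          ((hint.const_mul _).add (hint'.const_mul _)) fun x _ => ?_
        have hsqrt := sqrt_sub_le hρ (x - c)
        rw [← sub_add, sub_add_eq_add_sub, add_comm ρ c] at hsqrt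
        exact (mul_le_mul_of_nonneg_left hsqrt (sq_nonneg (z x))).trans_eq (by ring)
    _ = √ρ * (5 / 4) * (∫ x in (-1 : ℝ)..1, z x ^ 2) +
          √ρ / (4 * ρ ^ 2) * ∫ x in (-1 : ℝ)..1, z x ^ 2 * (x - c) ^ 2 := by
        rw [intervalIntegral.integral_add (hint.const_mul _) (hint'.const_mul _),
          intervalIntegral.integral_const_mul, intervalIntegral.integral_const_mul]
    _ ≤ √ρ * (5 / 4) * (∫ x in (-1 : ℝ)..1, z x ^ 2) +
          √ρ / (4 * ρ ^ 2) * (ρ ^ 2 * ∫ x in (-1 : ℝ)..1, z x ^ 2) := by gcongr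
    _ = 3 / 2 * √ρ * ∫ x in (-1 : ℝ)..1, z x ^ 2 := by field_simp; ring

/-- `δ` is a scale on which the turning point `c + R` of `turningPotential K c R` can be smoothed:
moving it to `c + R + δ` changes the potential by more than the lower order terms of
`legendreSource` for the multiplier `invSqrtJet (c + R + δ)`. -/
structure IsTurningScale (K c R δ : ℝ) : Prop where
  pos : 0 < δ
  hundred_le : 100 ≤ K * R * δ
  sq_le : 16 * (1 - (c + R) ^ 2) ^ 2 ≤ K * R * δ ^ 3

theorem one_sub_sq_le_add {b x t : ℝ} (hb : b ∈ Set.Icc (-1 : ℝ) 1) (hx : x ∈ Set.Icc (-1 : ℝ) 1)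
    (ht : |b - x| ≤ t) : 1 - x ^ 2 ≤ 1 - b ^ 2 + 2 * t := by
  have hsum : |b + x| ≤ 2 := abs_le.2 ⟨by linarith [hb.1, hx.1], by linarith [hb.2, hx.2]⟩
  have hprod : (b - x) * (b + x) ≤ t * 2 :=
    (le_abs_self _).trans ((abs_mul _ _).trans_le
      (mul_le_mul ht hsum (abs_nonneg _) ((abs_nonneg _).trans ht)))
  linarith

namespace IsTurningScale

variable {K c R δ x : ℝ}

theorem radius_pos (hδ : IsTurningScale K c R δ) (hK : 0 < K) : 0 < R := by
  have h : 0 < K * δ * R := by linarith [hδ.hundred_le]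
  exact pos_of_mul_pos_right h (mul_pos hK hδ.pos).le

theorem remainder_nonpos (hδ : IsTurningScale K c R δ) (hK : 0 ≤ K)
    (hb : c + R ∈ Set.Icc (-1 : ℝ) 1) (hx : x ∈ Set.Icc (-1 : ℝ) 1) {t : ℝ}
    (ht : t = c + R + δ - x) (htδ : 49 / 50 * δ ≤ t) :
    15 / 8 * (1 - x ^ 2) ^ 2 - 9 / 2 * x * (1 - x ^ 2) * t + (3 * x ^ 2 - 1) * t ^ 2 -
      1 / 2 * K * (δ ^ 2 + 2 * δ * R) * t ^ 2 ≤ 0 := by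
  obtain ⟨hδ0, hδ1, hδ2⟩ := hδ
  have ht0 : 0 < t := by linarith
  have hφ0 : 0 ≤ 1 - x ^ 2 := by nlinarith [hx.1, hx.2]
  have hφ : 1 - x ^ 2 ≤ 1 - (c + R) ^ 2 + 2 * t :=
    one_sub_sq_le_add hb hx (abs_le.2 ⟨by linarith, by linarith⟩)
  have hφb : 0 ≤ 1 - (c + R) ^ 2 := by nlinarith [hb.1, hb.2]
  generalize 1 - (c + R) ^ 2 = f at hφ hφb hδ2
  have hquad : (1 - x ^ 2) ^ 2 ≤ 2 * f ^ 2 + 8 * t ^ 2 := by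
    nlinarith [sq_nonneg (f - 2 * t)]
  have hcross : -x * (1 - x ^ 2) * t ≤ f ^ 2 / 2 + 5 / 2 * t ^ 2 := by
    nlinarith [sq_nonneg (f - t), mul_le_mul_of_nonneg_right hφ ht0.le, mul_nonneg hφ0 ht0.le, hx.1]
  have hlin : (3 * x ^ 2 - 1) * t ^ 2 ≤ 2 * t ^ 2 := by nlinarith [sq_nonneg t]
  have hlarge : 100 * t ^ 2 ≤ K * R * δ * t ^ 2 := by nlinarith [sq_nonneg t]
  have hsq : 24 / 25 * (K * R * δ ^ 3) ≤ K * R * δ * t ^ 2 := by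
    have : 24 / 25 * δ ^ 2 ≤ t ^ 2 := by nlinarith
    nlinarith [mul_le_mul_of_nonneg_left this (by linarith : 0 ≤ K * R * δ)]
  nlinarith [mul_nonneg hK (mul_nonneg (sq_nonneg δ) (sq_nonneg t))]

theorem source_invSqrtJet_le (hδ : IsTurningScale K c R δ) (hK : 0 ≤ K)
    (hb : c + R ∈ Set.Icc (-1 : ℝ) 1) (hx : x ∈ Set.Icc (-1 : ℝ) 1)
    (htδ : 49 / 50 * δ ≤ c + R + δ - x) :
    legendreSource (turningPotential K c R) (invSqrtJet (c + R + δ)) x ≤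
      K / 2 * √(c + R + δ - x) := by
  have hrem := hδ.remainder_nonpos hK hb hx rfl htδ
  have ht : 0 < c + R + δ - x := by linarith [hδ.pos]
  have hr : 0 < √(c + R + δ - x) := Real.sqrt_pos.2 ht
  have hrt : c + R + δ - x = √(c + R + δ - x) ^ 2 := (Real.sq_sqrt ht.le).symm
  simp only [legendreSource, deriv_turningPotential, turningPotential, invSqrtJet,
    Finset.prod_range_succ, Finset.prod_range_zero]
  generalize √(c + R + δ - x) = r at hr hrt
  rw [hrt] at hrem
  refine sub_nonpos.1 ((mul_nonpos_of_nonneg_of_nonpos (by positivity : 0 ≤ 1 / r ^ 7)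
    hrem).trans_eq' ?_)
  obtain rfl : c = r ^ 2 - R - δ + x := by linarith
  push_cast
  field_simp
  ring

end IsTurningScale

namespace IsLegendreSolution

variable {K c R δ x₀ : ℝ} {z ζ : ℝ → ℝ}

theorem integral_sq_mul_sq_sub_le_of_isTurningScale
    (H : IsLegendreSolution (turningPotential K c R) z ζ) (hK : 0 < K)
    (hδ : IsTurningScale K c R δ) :
    ∫ x in (-1 : ℝ)..1, z x ^ 2 * (x - c) ^ 2 ≤
      (R + δ) ^ 2 * ∫ x in (-1 : ℝ)..1, z x ^ 2 := by
  have hcoef : K * R ^ 2 + 4 ≤ 2 * K * (R + δ) ^ 2 := by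
    nlinarith [hδ.hundred_le, mul_nonneg hK.le (sq_nonneg R), mul_nonneg hK.le (sq_nonneg δ)]
  refine le_of_mul_le_mul_left (H.integral_sq_mul_sq_sub_le.trans ?_)
    (mul_pos two_pos hK)
  rw [← mul_assoc]
  exact mul_le_mul_of_nonneg_right hcoef (integral_sq_nonneg z)

theorem flux_invSqrtJet_le (H : IsLegendreSolution (turningPotential K c R) z ζ) (hK : 0 < K)
    (hb : c + R ∈ Set.Icc (-1 : ℝ) 1) (hδ : IsTurningScale K c R δ)
    (hx₀ : x₀ ∈ Set.Icc (-1 : ℝ) 1) (htδ : 49 / 50 * δ ≤ c + R + δ - x₀) :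
    legendreFlux (turningPotential K c R) z ζ (invSqrtJet (c + R + δ)) x₀ ≤
      K * √(R + δ) * ∫ x in (-1 : ℝ)..1, z x ^ 2 := by
  have hT := contDiff_turningPotential K c R
  have hjet : IsJetOn (invSqrtJet (c + R + δ)) (Set.Icc (-1) x₀) :=
    isJetOn_invSqrtJet fun x hx => by linarith [hx.2, hδ.pos]
  have hcont : ContinuousOn (fun x => z x ^ 2 * √(c + R + δ - x)) (Set.Icc (-1) 1) :=
    (H.continuousOn_fst.pow 2).mul (by fun_prop)
  have hmoment := H.integral_sq_mul_sq_sub_le_of_isTurningScale hK hδ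
  calc legendreFlux (turningPotential K c R) z ζ (invSqrtJet (c + R + δ)) x₀
      = ∫ x in (-1 : ℝ)..x₀, z x ^ 2 *
          legendreSource (turningPotential K c R) (invSqrtJet (c + R + δ)) x := by
        rw [H.integral_sq_mul_source hT hjet le_rfl hx₀.1 hx₀.2, H.flux_neg_one, sub_zero]
    _ ≤ ∫ x in (-1 : ℝ)..x₀, K / 2 * (z x ^ 2 * √(c + R + δ - x)) := by
        refine intervalIntegral.integral_mono_on hx₀.1
          ((H.continuousOn_sq_mul_source hT hjet le_rfl hx₀.2).intervalIntegrable_of_Icc hx₀.1)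
          (((hcont.mono (Set.Icc_subset_Icc_right hx₀.2)).intervalIntegrable_of_Icc
            hx₀.1).const_mul _) fun x hx => ?_
        have hsource := hδ.source_invSqrtJet_le hK.le hb ⟨hx.1, hx.2.trans hx₀.2⟩
          (htδ.trans (by linarith [hx.2]))
        exact (mul_le_mul_of_nonneg_left hsource (sq_nonneg (z x))).trans_eq (by ring)
    _ ≤ K / 2 * ∫ x in (-1 : ℝ)..1, z x ^ 2 * √(c + R + δ - x) := by
        rw [intervalIntegral.integral_const_mul]
        refine mul_le_mul_of_nonneg_left ?_ (by positivity)
        exact intervalIntegral.integral_mono_interval le_rfl hx₀.1 hx₀.2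
          (.of_forall fun x => mul_nonneg (sq_nonneg _) (Real.sqrt_nonneg _))
          (hcont.intervalIntegrable_of_Icc (by norm_num))
    _ ≤ K / 2 * (3 / 2 * √(R + δ) * ∫ x in (-1 : ℝ)..1, z x ^ 2) := by
        rw [add_assoc c R δ]
        exact mul_le_mul_of_nonneg_left (integral_sq_mul_sqrt_le H.continuousOn_fst
          (add_pos (hδ.radius_pos hK) hδ.pos) hmoment) (by positivity)
    _ ≤ K * √(R + δ) * ∫ x in (-1 : ℝ)..1, z x ^ 2 := by
        have := mul_nonneg (mul_nonneg hK.le (Real.sqrt_nonneg (R + δ))) (integral_sq_nonneg z)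
        linarith

end IsLegendreSolution

/-- The value at a critical point `x` of `(1 - x²) z⁴` of the flux for the multiplier
`(a - x)^(-1/2)`, up to the factor `z² / t^(5/2)`: here `t = a - x` and `T` is the potential. -/
noncomputable def fluxForm (T x t : ℝ) : ℝ :=
  (T + x ^ 2) * t ^ 2 / 2 - 3 / 2 * x * (1 - x ^ 2) * t + 3 / 4 * (1 - x ^ 2) ^ 2

theorem IsLegendreSolution.flux_invSqrtJet_of_critical {T z ζ : ℝ → ℝ} {a x : ℝ} (ht : x < a)
    (hcrit : ζ x = x * z x) : legendreFlux T z ζ (invSqrtJet a) x =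
      z x ^ 2 * (fluxForm (T x) x (a - x) / √(a - x) ^ 5) := by
  have hr : 0 < √(a - x) := Real.sqrt_pos.2 (sub_pos.2 ht)
  have hrt : √(a - x) ^ 2 = a - x := Real.sq_sqrt (sub_pos.2 ht).le
  rw [flux_of_critical _ hcrit]
  simp only [fluxForm, invSqrtJet, Finset.prod_range_succ, Finset.prod_range_zero]
  generalize √(a - x) = r at hr hrt
  rw [← hrt]
  push_cast
  field_simp
  ring

/-- The multiplier `(c + R + δ - x)^(-1/2)` detects the size of a solution at a critical point `x`:
the value of its flux there is bounded below in the way needed for `(1 - x²) z(x)⁴ ≤ C (∫ z²)²`. -/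
def IsFluxBound (K c R δ x C : ℝ) : Prop :=
  0 < fluxForm (turningPotential K c R x) x (c + R + δ - x) ∧
    (1 - x ^ 2) * (K ^ 2 * (R + δ) * (c + R + δ - x) ^ 5) ≤
      C * fluxForm (turningPotential K c R x) x (c + R + δ - x) ^ 2

theorem IsFluxBound.mono {K c R δ x C C' : ℝ} (h : IsFluxBound K c R δ x C) (hC : C ≤ C') :
    IsFluxBound K c R δ x C' :=
  ⟨h.1, h.2.trans (mul_le_mul_of_nonneg_right hC (sq_nonneg _))⟩

theorem IsLegendreSolution.one_sub_sq_mul_pow_four_le {K c R δ x C : ℝ} {z ζ : ℝ → ℝ}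
    (H : IsLegendreSolution (turningPotential K c R) z ζ) (hK : 0 < K)
    (hb : c + R ∈ Set.Icc (-1 : ℝ) 1) (hδ : IsTurningScale K c R δ)
    (hx : x ∈ Set.Icc (-1 : ℝ) 1) (hcrit : ζ x = x * z x) (htδ : 49 / 50 * δ ≤ c + R + δ - x)
    (hC : IsFluxBound K c R δ x C) :
    (1 - x ^ 2) * z x ^ 4 ≤ C * (∫ x in (-1 : ℝ)..1, z x ^ 2) ^ 2 := by
  have ht : 0 < c + R + δ - x := by linarith [hδ.pos]
  have hρ : 0 ≤ R + δ := (add_pos (hδ.radius_pos hK) hδ.pos).le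
  have hφ : 0 ≤ 1 - x ^ 2 := by nlinarith [hx.1, hx.2]
  have hflux := H.flux_invSqrtJet_le hK hb hδ hx htδ
  rw [flux_invSqrtJet_of_critical (sub_pos.1 ht) hcrit] at hflux
  obtain ⟨hQ, hbound⟩ := hC
  generalize fluxForm (turningPotential K c R x) x (c + R + δ - x) = Q at hflux hQ hbound
  generalize c + R + δ - x = t at ht hflux hbound
  have hQI : z x ^ 2 * Q ≤ K * √(R + δ) * (∫ x in (-1 : ℝ)..1, z x ^ 2) * √t ^ 5 := by
    rwa [← mul_div_assoc, div_le_iff₀ (pow_pos (Real.sqrt_pos.2 ht) 5)] at hflux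
  generalize ∫ x in (-1 : ℝ)..1, z x ^ 2 = I at hQI ⊢
  have hsq : (K * √(R + δ) * I * √t ^ 5) ^ 2 = K ^ 2 * (R + δ) * t ^ 5 * I ^ 2 := by
    calc _ = K ^ 2 * √(R + δ) ^ 2 * (√t ^ 2) ^ 5 * I ^ 2 := by ring
      _ = _ := by rw [Real.sq_sqrt hρ, Real.sq_sqrt ht.le]
  refine le_of_mul_le_mul_right ?_ (pow_pos hQ 2)
  calc (1 - x ^ 2) * z x ^ 4 * Q ^ 2 = (1 - x ^ 2) * (z x ^ 2 * Q) ^ 2 := by ring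
    _ ≤ (1 - x ^ 2) * (K ^ 2 * (R + δ) * t ^ 5 * I ^ 2) := by
        rw [← hsq]
        gcongr
    _ = (1 - x ^ 2) * (K ^ 2 * (R + δ) * t ^ 5) * I ^ 2 := by ring
    _ ≤ C * Q ^ 2 * I ^ 2 := mul_le_mul_of_nonneg_right hbound (sq_nonneg I)
    _ = C * I ^ 2 * Q ^ 2 := by ring

theorem le_fluxForm {T x t : ℝ} (hx : x ^ 2 ≤ 1) :
    T * t ^ 2 / 2 - t ^ 2 / 4 ≤ fluxForm T x t := by
  have hsq : fluxForm T x t =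
      T * t ^ 2 / 2 - x ^ 2 * t ^ 2 / 4 + 3 / 4 * (1 - x ^ 2 - x * t) ^ 2 := by
    rw [fluxForm]; ring
  rw [hsq]
  nlinarith [sq_nonneg (1 - x ^ 2 - x * t), mul_le_mul_of_nonneg_right hx (sq_nonneg t)]

/-- Quantitative separation of the turning points `c ± R` from each other and from `±1`, as it holds
for the Jacobi equation, where `N = 2n + α + β + 1`. -/
structure TurningPointBounds (N K c R : ℝ) : Prop where
  eq_sq_sub_one : K = N ^ 2 - 1
  two_le : 2 ≤ N
  neg_one_le_sub : -1 ≤ c - R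
  add_le_one : c + R ≤ 1
  two_le_mul : 2 ≤ (N + 1) * R
  one_sub_sq_le : 1 - c ^ 2 ≤ (N + 1) * R ^ 2

namespace TurningPointBounds

variable {N K c R : ℝ}

theorem neg (hB : TurningPointBounds N K c R) : TurningPointBounds N K (-c) R where
  __ := hB
  neg_one_le_sub := by linarith [hB.add_le_one]
  add_le_one := by linarith [hB.neg_one_le_sub]
  one_sub_sq_le := by rw [neg_sq]; exact hB.one_sub_sq_le

theorem pos (hB : TurningPointBounds N K c R) : 0 < K := by
  rw [hB.eq_sq_sub_one]
  nlinarith [hB.two_le]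

theorem radius_pos (hB : TurningPointBounds N K c R) : 0 < R :=
  pos_of_mul_pos_right (two_pos.trans_le hB.two_le_mul) (by linarith [hB.two_le])

theorem radius_le_one (hB : TurningPointBounds N K c R) : R ≤ 1 := by
  linarith [hB.neg_one_le_sub, hB.add_le_one]

theorem neg_one_le_center (hB : TurningPointBounds N K c R) : -1 ≤ c := by
  linarith [hB.neg_one_le_sub, hB.radius_pos]

theorem add_mem_Icc (hB : TurningPointBounds N K c R) : c + R ∈ Set.Icc (-1 : ℝ) 1 :=
  ⟨by linarith [hB.neg_one_le_center, hB.radius_pos], hB.add_le_one⟩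

theorem one_sub_add_sq_nonneg (hB : TurningPointBounds N K c R) : 0 ≤ 1 - (c + R) ^ 2 := by
  nlinarith [hB.add_mem_Icc.1, hB.add_mem_Icc.2]

theorem one_le_mul (hB : TurningPointBounds N K c R) : 1 ≤ N * R := by
  linarith [hB.two_le_mul, hB.radius_le_one]

theorem one_le_mul_sq (hB : TurningPointBounds N K c R) : 1 ≤ K * R ^ 2 := by
  have hsq : 2 ^ 2 ≤ ((N + 1) * R) ^ 2 := pow_le_pow_left₀ two_pos.le hB.two_le_mul 2
  have hfactor : (N + 1) * (K * R ^ 2) = (N - 1) * ((N + 1) * R) ^ 2 := by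
    rw [hB.eq_sq_sub_one]; ring
  nlinarith [hB.two_le]

theorem one_sub_add_sq_le (hB : TurningPointBounds N K c R) :
    1 - (c + R) ^ 2 ≤ 2 * (N + 1) * R ^ 2 := by
  have hcross : -2 * c * R ≤ (N + 1) * R * R :=
    mul_le_mul_of_nonneg_right (by linarith [hB.two_le_mul, hB.neg_one_le_center]) hB.radius_pos.le
  nlinarith [hB.one_sub_sq_le]

theorem mul_one_sub_add_sq_le (hB : TurningPointBounds N K c R) :
    K * (1 - (c + R) ^ 2) ≤ 4 * N ^ 3 * R ^ 2 := by
  have hKN : K * (N + 1) ≤ 2 * N ^ 3 := by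
    rw [hB.eq_sq_sub_one]; nlinarith [sq_nonneg (N - 1), hB.two_le]
  nlinarith [mul_le_mul_of_nonneg_left hB.one_sub_add_sq_le hB.pos.le,
    mul_le_mul_of_nonneg_right hKN (sq_nonneg R)]

end TurningPointBounds

/-- Necessary conditions for a point `x` to the right of the centre `c` to be a critical point of
`(1 - x²) z⁴`, where `z` is a solution with potential `turningPotential K c R`. -/
structure CriticalPointBounds (K c R x : ℝ) : Prop where
  mem_Ioo : x ∈ Set.Ioo (-1 : ℝ) 1
  center_le : c ≤ x
  potential_add_sq_nonneg : 0 ≤ turningPotential K c R x + x ^ 2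
  potential_pos : 0 < x → 0 < turningPotential K c R x
  mul_le : 6 * x * (1 - x ^ 2) * (K * (x - c)) ≤
    (turningPotential K c R x + 4) * (turningPotential K c R x + x ^ 2)

theorem IsLegendreSolution.criticalPointBounds {K c R x : ℝ} {z ζ : ℝ → ℝ}
    (H : IsLegendreSolution (turningPotential K c R) z ζ) (hK : 0 ≤ K)
    (hx : x ∈ Set.Ioo (-1 : ℝ) 1) (hc : c ≤ x) (hz : z x ≠ 0) (hcrit : ζ x = x * z x) :
    CriticalPointBounds K c R x :=
  have hx' := Set.Ioo_subset_Icc_self hx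
  ⟨hx, hc, H.potential_add_sq_nonneg hK hx' hc hz hcrit,
    fun h0 => H.potential_pos_of_pos hK ⟨h0, hx'.2⟩ hc hz hcrit,
    H.mul_le_potential_mul hK hx' hc hz hcrit⟩

namespace CriticalPointBounds

variable {N K c R δ D M x t : ℝ}

theorem sq_le_one (hx : CriticalPointBounds K c R x) : x ^ 2 ≤ 1 := by
  nlinarith [hx.mem_Ioo.1, hx.mem_Ioo.2]

theorem le_sub (hx : CriticalPointBounds K c R x) (hK : 0 < K) (hδ : IsTurningScale K c R δ) :
    49 / 50 * δ ≤ c + R + δ - x := by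
  have hR := hδ.radius_pos hK
  obtain ⟨hδ0, h100, -⟩ := hδ
  by_contra! h
  have hT : turningPotential K c R x = -(K * ((x - c - R) * (x - c + R))) := by
    rw [turningPotential]; ring
  have hprod : 1 / 50 * δ * (2 * R) ≤ (x - c - R) * (x - c + R) :=
    mul_le_mul (by linarith) (by linarith) (by linarith) (by linarith)
  have hlarge := mul_le_mul_of_nonneg_left hprod hK.le
  have hT1 := hx.potential_add_sq_nonneg
  linarith [hx.sq_le_one]

theorem le_fluxForm_of_far (hx : CriticalPointBounds K c R x) (hK : 0 < K)
    (hδ : IsTurningScale K c R δ) (ht : t = c + R + δ - x) (hfar : 2 * δ ≤ t) :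
    K * R * t ^ 3 / 8 ≤ fluxForm (turningPotential K c R x) x t := by
  have hKR := mul_pos hK (hδ.radius_pos hK)
  have hT : turningPotential K c R x = K * ((t - δ) * (2 * R + δ - t)) := by
    rw [turningPotential, ht]; ring
  have hprod : t / 2 * R ≤ (t - δ) * (2 * R + δ - t) :=
    mul_le_mul (by linarith) (by linarith [hx.center_le]) (hδ.radius_pos hK).le
      (by linarith [hδ.pos])
  have hpotential : K * R * t / 2 ≤ turningPotential K c R x := by
    rw [hT]
    linarith [mul_le_mul_of_nonneg_left hprod hK.le]
  have hlarge : 200 ≤ K * R * t := by nlinarith [hδ.hundred_le]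
  refine le_trans ?_ (le_fluxForm hx.sq_le_one)
  nlinarith [mul_le_mul_of_nonneg_right hpotential (sq_nonneg t),
    mul_le_mul_of_nonneg_right hlarge (sq_nonneg t)]

theorem isFluxBound_of_far (hx : CriticalPointBounds K c R x) (hK : 0 < K)
    (hδ : IsTurningScale K c R δ) (ht : t = c + R + δ - x) (hfar : 2 * δ ≤ t)
    (hM : (1 - x ^ 2) * (R + δ) ≤ M * R ^ 2 * t) : IsFluxBound K c R δ x (64 * M) := by
  have hR := hδ.radius_pos hK
  have ht0 : 0 < t := by linarith [hδ.pos]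
  have hM0 : 0 ≤ M := by
    have hleft := mul_pos (one_sub_sq_pos hx.mem_Ioo) (add_pos hR hδ.pos)
    rw [mul_assoc] at hM
    exact (pos_of_mul_pos_left (hleft.trans_le hM) (by positivity)).le
  have hQ := hx.le_fluxForm_of_far hK hδ ht hfar
  have hQ0 : 0 < K * R * t ^ 3 / 8 := by positivity
  rw [IsFluxBound, ← ht]
  refine ⟨hQ0.trans_le hQ, ?_⟩
  calc (1 - x ^ 2) * (K ^ 2 * (R + δ) * t ^ 5)
      = (1 - x ^ 2) * (R + δ) * (K ^ 2 * t ^ 5) := by ring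
    _ ≤ M * R ^ 2 * t * (K ^ 2 * t ^ 5) := mul_le_mul_of_nonneg_right hM (by positivity)
    _ = 64 * M * (K * R * t ^ 3 / 8) ^ 2 := by ring
    _ ≤ 64 * M * fluxForm (turningPotential K c R x) x t ^ 2 := by gcongr

theorem half_radius_le (hx : CriticalPointBounds K c R x) (hB : TurningPointBounds N K c R)
    (hT : turningPotential K c R x < 3 / 5) : R / 2 ≤ x - c := by
  have hKR := hB.one_le_mul_sq
  by_contra! h
  have hsq : (x - c) ^ 2 ≤ (R / 2) ^ 2 := pow_le_pow_left₀ (sub_nonneg.2 hx.center_le) h.le 2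
  rw [turningPotential] at hT
  linarith [mul_le_mul_of_nonneg_left hsq hB.pos.le]

theorem mul_add_le_fluxForm (hx : CriticalPointBounds K c R x) (hB : TurningPointBounds N K c R)
    (hT : turningPotential K c R x < 3 / 5) (ht : 98 ≤ K * R * t) :
    9 / 20 * ((turningPotential K c R x + x ^ 2) * t ^ 2) + 3 / 4 * (1 - x ^ 2) ^ 2 ≤
      fluxForm (turningPotential K c R x) x t := by
  have hφ := one_sub_sq_pos hx.mem_Ioo
  have hKR := mul_pos hB.pos hB.radius_pos
  have ht0 : 0 < t := pos_of_mul_pos_right (lt_of_lt_of_le (by norm_num) ht) hKR.le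
  have hX := mul_le_mul_of_nonneg_left (hx.half_radius_le hB hT) hB.pos.le
  have hsq := hx.potential_add_sq_nonneg
  have hmul := hx.mul_le
  rw [fluxForm]
  generalize turningPotential K c R x = T at *
  suffices hcross : 3 / 2 * (x * (1 - x ^ 2) * t) ≤ 1 / 20 * ((T + x ^ 2) * t ^ 2) by linarith
  rcases le_or_gt x 0 with hx0 | hx0
  · have hneg : x * (1 - x ^ 2) * t ≤ 0 :=
      mul_nonpos_of_nonpos_of_nonneg (mul_nonpos_of_nonpos_of_nonneg hx0 hφ.le) ht0.le
    linarith [mul_nonneg hsq (sq_nonneg t)]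
  · have hpos : 0 < x * (1 - x ^ 2) := mul_pos hx0 hφ
    have hlin : 3 / 5 * (x * (1 - x ^ 2)) * (K * R) ≤ T + x ^ 2 := by
      have hT5 : (T + 4) * (T + x ^ 2) ≤ 5 * (T + x ^ 2) :=
        mul_le_mul_of_nonneg_right (by linarith) hsq
      linarith [mul_le_mul_of_nonneg_left hX hpos.le]
    have hlarge := mul_le_mul_of_nonneg_left ht (mul_pos hpos ht0).le
    linarith [mul_le_mul_of_nonneg_right hlin (sq_nonneg t), mul_pos hpos ht0]

theorem le_fluxForm_of_near (hx : CriticalPointBounds K c R x) (hB : TurningPointBounds N K c R)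
    (hD : 100 ≤ D) (ht : 98 ≤ K * R * t) (htD : K * R * t ≤ 2 * D) :
    t ^ 2 / (100 * D ^ 2) ≤ fluxForm (turningPotential K c R x) x t := by
  have hKR := mul_pos hB.pos hB.radius_pos
  have ht0 : 0 < t := pos_of_mul_pos_right (lt_of_lt_of_le (by norm_num) ht) hKR.le
  have ht2 : 0 < t ^ 2 := pow_pos ht0 2
  have hsmall : t ^ 2 / (100 * D ^ 2) ≤ t ^ 2 / 100 := by
    gcongr
    nlinarith
  rcases le_or_gt (3 / 5) (turningPotential K c R x) with hT | hT
  · refine hsmall.trans (le_trans ?_ (le_fluxForm hx.sq_le_one))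
    linarith [mul_le_mul_of_nonneg_right hT ht2.le]
  refine le_trans ?_ (hx.mul_add_le_fluxForm hB hT ht)
  rcases le_or_gt (1 / 2) x with hx2 | hx2
  · have hTx : 1 / 4 ≤ turningPotential K c R x + x ^ 2 := by
      nlinarith [hx.potential_pos (by linarith)]
    refine hsmall.trans ?_
    linarith [mul_le_mul_of_nonneg_right hTx ht2.le, sq_nonneg (1 - x ^ 2)]
  · have htR : t ≤ 2 * D * R := by
      refine le_of_mul_le_mul_left ?_ hKR
      nlinarith [mul_le_mul_of_nonneg_left hB.one_le_mul_sq (by linarith : 0 ≤ 2 * D)]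
    have hφR : R / 4 ≤ 1 - x ^ 2 := by
      nlinarith [hx.half_radius_le hB hT, hB.neg_one_le_center, hx.mem_Ioo.1]
    have hφt : t / (8 * D) ≤ 1 - x ^ 2 := by
      refine le_trans ?_ hφR
      rw [div_le_iff₀ (by linarith)]
      linarith
    calc t ^ 2 / (100 * D ^ 2) ≤ 3 / 4 * (t / (8 * D)) ^ 2 := by
          rw [div_pow, mul_pow, ← mul_div_assoc, div_le_div_iff₀ (by positivity) (by positivity)]
          nlinarith [sq_nonneg D]
      _ ≤ 3 / 4 * (1 - x ^ 2) ^ 2 := by gcongr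
      _ ≤ _ := le_add_of_nonneg_left
          (mul_nonneg (by norm_num) (mul_nonneg hx.potential_add_sq_nonneg ht2.le))

end CriticalPointBounds

namespace TurningPointBounds

variable {N K c R δ D : ℝ}

theorem radius_add_le (hB : TurningPointBounds N K c R) (hδ : IsTurningScale K c R δ)
    (hδD : K * R * δ = D) : R + δ ≤ 2 * D * R := by
  have hR := hB.radius_pos
  refine le_of_mul_le_mul_left ?_ (mul_pos hB.pos hR)
  nlinarith [hB.one_le_mul_sq, hδ.hundred_le]

theorem radius_add_le_of_large (hB : TurningPointBounds N K c R)
    (hδ3 : K * R * δ ^ 3 = 1000 * (1 - (c + R) ^ 2) ^ 2) : R + δ ≤ 24 * R := by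
  have hR := hB.radius_pos
  have hK := hB.pos
  have hN : (N + 1) ^ 2 ≤ 3 * K := by rw [hB.eq_sq_sub_one]; nlinarith [hB.two_le]
  suffices hcube : K * R * δ ^ 3 ≤ K * R * (23 * R) ^ 3 by
    have := le_of_pow_le_pow_left₀ three_ne_zero (by positivity)
      (le_of_mul_le_mul_left hcube (mul_pos hK hR))
    linarith
  calc K * R * δ ^ 3 = 1000 * (1 - (c + R) ^ 2) ^ 2 := hδ3
    _ ≤ 1000 * (2 * (N + 1) * R ^ 2) ^ 2 := by
        gcongr
        exacts [hB.one_sub_add_sq_nonneg, hB.one_sub_add_sq_le]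
    _ = 4000 * R ^ 4 * (N + 1) ^ 2 := by ring
    _ ≤ 4000 * R ^ 4 * (3 * K) := by gcongr
    _ ≤ K * R * (23 * R) ^ 3 := by
        have : 0 < K * R ^ 4 := by positivity
        linarith

theorem one_sub_add_sq_le_of_large (hB : TurningPointBounds N K c R) (hδ : 0 ≤ δ)
    (hδ3 : K * R * δ ^ 3 = 1000 * (1 - (c + R) ^ 2) ^ 2) : 1 - (c + R) ^ 2 ≤ N * R * δ := by
  have hR := hB.radius_pos
  have hN : 0 < N := by linarith [hB.two_le]
  have hKφ := hB.mul_one_sub_add_sq_le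
  generalize 1 - (c + R) ^ 2 = φ at hδ3 hKφ ⊢
  refine le_of_pow_le_pow_left₀ three_ne_zero (by positivity) (le_of_mul_le_mul_left ?_ hB.pos)
  calc K * φ ^ 3 = K * φ * φ ^ 2 := by ring
    _ ≤ 4 * N ^ 3 * R ^ 2 * φ ^ 2 := mul_le_mul_of_nonneg_right hKφ (sq_nonneg φ)
    _ ≤ N ^ 3 * R ^ 2 * (1000 * φ ^ 2) := by
        have : 0 ≤ N ^ 3 * R ^ 2 * φ ^ 2 := by positivity
        linarith
    _ = K * (N * R * δ) ^ 3 := by rw [← hδ3]; ring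

theorem mul_scale_sq_le_of_large (hB : TurningPointBounds N K c R)
    (hδ3 : K * R * δ ^ 3 = 1000 * (1 - (c + R) ^ 2) ^ 2) :
    K * δ ^ 2 ≤ 160 * N * (1 - (c + R) ^ 2) := by
  have hN : 0 < N := by linarith [hB.two_le]
  have hφ := hB.one_sub_add_sq_nonneg
  have hKφ := hB.mul_one_sub_add_sq_le
  generalize 1 - (c + R) ^ 2 = φ at hδ3 hφ hKφ ⊢
  refine le_of_pow_le_pow_left₀ three_ne_zero (by positivity)
    (le_of_mul_le_mul_left ?_ (pow_pos hB.radius_pos 2))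
  calc R ^ 2 * (K * δ ^ 2) ^ 3 = K * (K * R * δ ^ 3) ^ 2 := by ring
    _ = 10 ^ 6 * φ ^ 3 * (K * φ) := by rw [hδ3]; ring
    _ ≤ 10 ^ 6 * φ ^ 3 * (4 * N ^ 3 * R ^ 2) := by gcongr
    _ ≤ R ^ 2 * (160 * N * φ) ^ 3 := by
        have : 0 ≤ φ ^ 3 * N ^ 3 * R ^ 2 := by positivity
        linarith

end TurningPointBounds

namespace CriticalPointBounds

variable {N K c R δ D x : ℝ}

theorem one_sub_sq_le_add_of_le (hx : CriticalPointBounds K c R x)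
    (hB : TurningPointBounds N K c R) (hδ : IsTurningScale K c R δ) {s : ℝ}
    (hs : δ ≤ s) (hxs : c + R + δ - x ≤ s + δ) :
    1 - x ^ 2 ≤ 1 - (c + R) ^ 2 + 2 * s :=
  one_sub_sq_le_add hB.add_mem_Icc (Set.Ioo_subset_Icc_self hx.mem_Ioo)
    (abs_le.2 ⟨by linarith [hx.le_sub hB.pos hδ, hδ.pos], by linarith⟩)

theorem isFluxBound_of_small_of_far (hx : CriticalPointBounds K c R x)
    (hB : TurningPointBounds N K c R) (hδ : IsTurningScale K c R δ) (hδD : K * R * δ = D)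
    (hφ : 1 - (c + R) ^ 2 ≤ δ) (hfar : 2 * δ ≤ c + R + δ - x) :
    IsFluxBound K c R δ x (256 * D * N) := by
  have hR := hB.radius_pos
  have hD : 100 ≤ D := hδ.hundred_le.trans_eq hδD
  have hρ := hB.radius_add_le hδ hδD
  obtain ⟨t, ht⟩ : ∃ t, t = c + R + δ - x := ⟨_, rfl⟩
  rw [← ht] at hfar
  have hφt : 1 - x ^ 2 ≤ 2 * t := by
    linarith [hx.one_sub_sq_le_add_of_le hB hδ (s := t - δ) (by linarith) (by linarith), hδ.pos]
  refine (hx.isFluxBound_of_far (M := 4 * D * N) hB.pos hδ ht hfar ?_).mono (by linarith)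
  have ht0 : 0 < t := by linarith [hδ.pos]
  calc (1 - x ^ 2) * (R + δ) ≤ 2 * t * (2 * D * R) :=
        mul_le_mul hφt hρ (add_pos hR hδ.pos).le (by linarith)
    _ = 4 * D * R * t * 1 := by ring
    _ ≤ 4 * D * R * t * (N * R) := by
        gcongr
        exact hB.one_le_mul
    _ = 4 * D * N * R ^ 2 * t := by ring

theorem isFluxBound_of_small_of_near (hx : CriticalPointBounds K c R x)
    (hB : TurningPointBounds N K c R) (hδ : IsTurningScale K c R δ) (hδD : K * R * δ = D)
    (hφ : 1 - (c + R) ^ 2 ≤ δ) (hnear : c + R + δ - x ≤ 2 * δ) :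
    IsFluxBound K c R δ x (120000 * D ^ 7 * N) := by
  have hR := hB.radius_pos
  have hδ0 := hδ.pos
  have hKR := mul_pos hB.pos hR
  have hD : 100 ≤ D := hδ.hundred_le.trans_eq hδD
  have htδ := hx.le_sub hB.pos hδ
  have hφδ : 1 - x ^ 2 ≤ 3 * δ := by
    linarith [hx.one_sub_sq_le_add_of_le hB hδ le_rfl (by linarith)]
  rw [IsFluxBound]
  generalize c + R + δ - x = t at hnear htδ ⊢
  have ht0 : 0 < t := by linarith
  have hQ := hx.le_fluxForm_of_near (t := t) hB hD (by nlinarith) (by nlinarith)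
  have hQ0 : 0 < t ^ 2 / (100 * D ^ 2) := by positivity
  refine ⟨hQ0.trans_le hQ, ?_⟩
  have hρ : K ^ 2 * (R + δ) * δ ^ 2 ≤ 2 * D ^ 3 * N := by
    have hDN : K * δ ≤ D * N := by
      rw [← hδD]
      nlinarith [mul_le_mul_of_nonneg_left hB.one_le_mul (mul_pos hB.pos hδ0).le]
    calc K ^ 2 * (R + δ) * δ ^ 2 ≤ K ^ 2 * (2 * D * R) * δ ^ 2 := by
          gcongr
          exact hB.radius_add_le hδ hδD
      _ = 2 * D ^ 2 * (K * δ) := by rw [← hδD]; ring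
      _ ≤ 2 * D ^ 2 * (D * N) := by gcongr
      _ = 2 * D ^ 3 * N := by ring
  calc (1 - x ^ 2) * (K ^ 2 * (R + δ) * t ^ 5)
      ≤ 3 * δ * (K ^ 2 * (R + δ) * (2 * δ * t ^ 4)) := by
        rw [pow_succ' t 4]
        have := hB.pos
        gcongr
    _ = 6 * (K ^ 2 * (R + δ) * δ ^ 2) * t ^ 4 := by ring
    _ ≤ 6 * (2 * D ^ 3 * N) * t ^ 4 := by gcongr
    _ = 120000 * D ^ 7 * N * (t ^ 2 / (100 * D ^ 2)) ^ 2 := by field_simp; ring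
    _ ≤ _ := by
        have hN : 0 ≤ N := by linarith [hB.two_le]
        gcongr

theorem isFluxBound_of_large_of_far (hx : CriticalPointBounds K c R x)
    (hB : TurningPointBounds N K c R) (hδ : IsTurningScale K c R δ)
    (hδ3 : K * R * δ ^ 3 = 1000 * (1 - (c + R) ^ 2) ^ 2) (hfar : 2 * δ ≤ c + R + δ - x) :
    IsFluxBound K c R δ x (4608 * N) := by
  have hR := hB.radius_pos
  have hN : 0 < N := by linarith [hB.two_le]
  have hδ0 := hδ.pos
  have hK := hB.pos
  have hρ := hB.radius_add_le_of_large hδ3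
  obtain ⟨t, ht⟩ : ∃ t, t = c + R + δ - x := ⟨_, rfl⟩
  rw [← ht] at hfar
  have ht0 : 0 < t := by linarith
  have hφx := hx.one_sub_sq_le_add_of_le hB hδ (s := t - δ) (by linarith) (by linarith)
  have hφb := hB.one_sub_add_sq_le_of_large hδ0.le hδ3
  have hφt : 1 - x ^ 2 ≤ 3 * N * R * t := by
    have hδt : N * R * δ ≤ N * R * t := by gcongr; linarith
    linarith [mul_le_mul_of_nonneg_right hB.one_le_mul ht0.le]
  refine (hx.isFluxBound_of_far (M := 72 * N) hK hδ ht hfar ?_).mono (by linarith)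
  calc (1 - x ^ 2) * (R + δ) ≤ 3 * N * R * t * (24 * R) :=
        mul_le_mul hφt hρ (by linarith) (by positivity)
    _ = 72 * N * R ^ 2 * t := by ring

theorem one_sub_sq_sq_le_fluxForm (hx : CriticalPointBounds K c R x) {t : ℝ} (ht : 0 ≤ t)
    (htφ : 6 * t ≤ 1 - x ^ 2) :
    (1 - x ^ 2) ^ 2 / 2 ≤ fluxForm (turningPotential K c R x) x t := by
  have hxt : x * t ≤ t := mul_le_of_le_one_left ht hx.mem_Ioo.2.le
  have hcross : (1 - x ^ 2) * (3 / 2 * (x * t)) ≤ (1 - x ^ 2) * (1 / 4 * (1 - x ^ 2)) :=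
    mul_le_mul_of_nonneg_left (by linarith) (one_sub_sq_pos hx.mem_Ioo).le
  rw [fluxForm]
  linarith [mul_nonneg hx.potential_add_sq_nonneg (sq_nonneg t)]

theorem isFluxBound_of_large_of_near (hx : CriticalPointBounds K c R x)
    (hB : TurningPointBounds N K c R) (hδ : IsTurningScale K c R δ)
    (hδ3 : K * R * δ ^ 3 = 1000 * (1 - (c + R) ^ 2) ^ 2) (hφ : 100 * δ ≤ 1 - (c + R) ^ 2)
    (hnear : c + R + δ - x ≤ 2 * δ) : IsFluxBound K c R δ x (10 ^ 10 * N) := by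
  have hN : 0 ≤ N := by linarith [hB.two_le]
  have hK := hB.pos
  have hR := hB.radius_pos
  have hδ0 := hδ.pos
  have hφx0 := one_sub_sq_pos hx.mem_Ioo
  have htδ := hx.le_sub hK hδ
  have hφx : 98 / 100 * (1 - (c + R) ^ 2) ≤ 1 - x ^ 2 := by
    linarith [one_sub_sq_le_add (t := δ) (Set.Ioo_subset_Icc_self hx.mem_Ioo) hB.add_mem_Icc
      (abs_le.2 ⟨by linarith, by linarith⟩)]
  have hKδ := hB.mul_scale_sq_le_of_large hδ3
  have hρ := hB.radius_add_le_of_large hδ3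
  have hQ := hx.one_sub_sq_sq_le_fluxForm (t := c + R + δ - x) (by linarith) (by linarith)
  have hQ0 : 0 < (1 - x ^ 2) ^ 2 / 2 := by positivity
  refine ⟨hQ0.trans_le hQ, ?_⟩
  generalize fluxForm _ _ _ = Q at hQ ⊢
  generalize c + R + δ - x = t at hnear htδ ⊢
  have ht0 : 0 ≤ t := by linarith
  generalize 1 - (c + R) ^ 2 = φb at hδ3 hφ hφx hKδ
  have hφb : 0 ≤ φb := by linarith
  generalize 1 - x ^ 2 = φ at hφx hφx0 hQ ⊢
  calc φ * (K ^ 2 * (R + δ) * t ^ 5) ≤ φ * (K ^ 2 * (24 * R) * (2 * δ) ^ 5) := by gcongr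
    _ = 768 * φ * (K * δ ^ 2 * (K * R * δ ^ 3)) := by ring
    _ ≤ 768 * φ * (160 * N * φb * (1000 * φb ^ 2)) := by rw [hδ3]; gcongr
    _ ≤ 768 * φ * (160 * N * (2 * φ) * (1000 * (2 * φ) ^ 2)) := by
        have : φb ≤ 2 * φ := by linarith
        gcongr
    _ = 983040000 * N * φ ^ 4 := by ring
    _ ≤ 10 ^ 10 * N * (φ ^ 2 / 2) ^ 2 := by
        have : 0 ≤ N * φ ^ 4 := by positivity
        linarith
    _ ≤ 10 ^ 10 * N * Q ^ 2 := by gcongr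

end CriticalPointBounds

theorem IsTurningScale.of_small {K c R δ : ℝ} (hδ : 0 < δ) (hKR : 100 ≤ K * R * δ)
    (hφ0 : 0 ≤ 1 - (c + R) ^ 2) (hφ : 1 - (c + R) ^ 2 ≤ δ) : IsTurningScale K c R δ := by
  refine ⟨hδ, hKR, ?_⟩
  have hsq : (1 - (c + R) ^ 2) ^ 2 ≤ δ ^ 2 := pow_le_pow_left₀ hφ0 hφ 2
  nlinarith [mul_le_mul_of_nonneg_right hKR (sq_nonneg δ)]

theorem exists_isTurningScale_of_large {K c R : ℝ} (hKR : 0 < K * R)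
    (hφ : 10 ^ 9 ≤ K * R * (1 - (c + R) ^ 2)) :
    ∃ δ : ℝ, IsTurningScale K c R δ ∧ K * R * δ ^ 3 = 1000 * (1 - (c + R) ^ 2) ^ 2 ∧
      100 * δ ≤ 1 - (c + R) ^ 2 := by
  have hφ0 : 0 < 1 - (c + R) ^ 2 :=
    pos_of_mul_pos_right (lt_of_lt_of_le (by norm_num) hφ) hKR.le
  suffices h : ∃ δ : ℝ, 0 < δ ∧ 100 ≤ K * R * δ ∧
      K * R * δ ^ 3 = 1000 * (1 - (c + R) ^ 2) ^ 2 ∧ 100 * δ ≤ 1 - (c + R) ^ 2 by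
    obtain ⟨δ, hδ, h100, hcube, hle⟩ := h
    exact ⟨δ, ⟨hδ, h100, by linarith [sq_nonneg (1 - (c + R) ^ 2)]⟩, hcube, hle⟩
  generalize 1 - (c + R) ^ 2 = φ at hφ hφ0 ⊢
  have hq : 0 < 1000 * φ ^ 2 / (K * R) := by positivity
  obtain ⟨δ, hδ, hroot⟩ : ∃ δ : ℝ, 0 < δ ∧ δ ^ 3 = 1000 * φ ^ 2 / (K * R) :=
    ⟨_, Real.rpow_pos_of_pos hq _, Real.rpow_inv_natCast_pow hq.le three_ne_zero⟩
  have hcube : K * R * δ ^ 3 = 1000 * φ ^ 2 := by rw [hroot, mul_div_cancel₀ _ hKR.ne']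
  refine ⟨δ, hδ, ?_, hcube, ?_⟩
  · refine le_of_pow_le_pow_left₀ three_ne_zero (by positivity) ?_
    have hsq : (10 ^ 9 : ℝ) ^ 2 ≤ (K * R * φ) ^ 2 := pow_le_pow_left₀ (by norm_num) hφ 2
    calc (100 : ℝ) ^ 3 ≤ 1000 * (K * R * φ) ^ 2 := by linarith
      _ = (K * R) ^ 2 * (K * R * δ ^ 3) := by rw [hcube]; ring
      _ = (K * R * δ) ^ 3 := by ring
  · refine le_of_pow_le_pow_left₀ three_ne_zero hφ0.le (le_of_mul_le_mul_left ?_ hKR)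
    calc K * R * (100 * δ) ^ 3 = 10 ^ 6 * (K * R * δ ^ 3) := by ring
      _ = 10 ^ 9 * φ ^ 2 := by rw [hcube]; ring
      _ ≤ K * R * φ * φ ^ 2 := mul_le_mul_of_nonneg_right hφ (sq_nonneg φ)
      _ = K * R * φ ^ 3 := by ring

theorem CriticalPointBounds.exists_isFluxBound {N K c R x : ℝ} (hx : CriticalPointBounds K c R x)
    (hB : TurningPointBounds N K c R) :
    ∃ δ, IsTurningScale K c R δ ∧ IsFluxBound K c R δ x (10 ^ 80 * N) := by
  have hKR := mul_pos hB.pos hB.radius_pos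
  have hN : 0 ≤ N := by linarith [hB.two_le]
  rcases le_total (K * R * (1 - (c + R) ^ 2)) (10 ^ 9) with hφ | hφ
  · have hδD : K * R * (10 ^ 9 / (K * R)) = 10 ^ 9 := mul_div_cancel₀ _ hKR.ne'
    have hφδ := (le_div_iff₀' hKR).2 hφ
    have hδ := IsTurningScale.of_small (by positivity) (by rw [hδD]; norm_num)
      hB.one_sub_add_sq_nonneg hφδ
    refine ⟨_, hδ, ?_⟩
    rcases le_total (2 * (10 ^ 9 / (K * R))) (c + R + 10 ^ 9 / (K * R) - x) with h | h
    · exact (hx.isFluxBound_of_small_of_far hB hδ hδD hφδ h).mono (by linarith)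
    · exact (hx.isFluxBound_of_small_of_near hB hδ hδD hφδ h).mono (by linarith)
  · obtain ⟨δ, hδ, hcube, hφδ⟩ := exists_isTurningScale_of_large hKR hφ
    refine ⟨δ, hδ, ?_⟩
    rcases le_total (2 * δ) (c + R + δ - x) with h | h
    · exact (hx.isFluxBound_of_large_of_far hB hδ hcube h).mono (by linarith)
    · exact (hx.isFluxBound_of_large_of_near hB hδ hcube hφδ h).mono (by linarith)

namespace IsLegendreSolution

variable {N K c R x : ℝ} {z ζ : ℝ → ℝ}

theorem one_sub_sq_mul_pow_four_le_of_center_le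
    (H : IsLegendreSolution (turningPotential K c R) z ζ) (hB : TurningPointBounds N K c R)
    (hx : x ∈ Set.Ioo (-1 : ℝ) 1) (hc : c ≤ x) (hz : z x ≠ 0) (hcrit : ζ x = x * z x) :
    (1 - x ^ 2) * z x ^ 4 ≤ 10 ^ 80 * N * (∫ x in (-1 : ℝ)..1, z x ^ 2) ^ 2 := by
  have hxc := H.criticalPointBounds hB.pos.le hx hc hz hcrit
  obtain ⟨δ, hδ, hflux⟩ := hxc.exists_isFluxBound hB
  exact H.one_sub_sq_mul_pow_four_le hB.pos hB.add_mem_Icc hδ (Set.Ioo_subset_Icc_self hx) hcrit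
    (hxc.le_sub hB.pos hδ) hflux

theorem one_sub_sq_mul_pow_four_le_of_critical
    (H : IsLegendreSolution (turningPotential K c R) z ζ) (hB : TurningPointBounds N K c R)
    (hx : x ∈ Set.Ioo (-1 : ℝ) 1) (hz : z x ≠ 0) (hcrit : ζ x = x * z x) :
    (1 - x ^ 2) * z x ^ 4 ≤ 10 ^ 80 * N * (∫ x in (-1 : ℝ)..1, z x ^ 2) ^ 2 := by
  rcases le_total c x with hc | hc
  · exact H.one_sub_sq_mul_pow_four_le_of_center_le hB hx hc hz hcrit
  · have hT : (fun x => turningPotential K c R (-x)) = turningPotential K (-c) R := by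
      funext x
      simp only [turningPotential]
      ring
    have hreflect := H.reflect
    rw [hT] at hreflect
    have hbound := hreflect.one_sub_sq_mul_pow_four_le_of_center_le hB.neg (x := -x)
      ⟨neg_lt_neg hx.2, neg_lt.1 hx.1⟩ (neg_le_neg hc) (by rwa [neg_neg])
      (by rw [neg_neg, hcrit, neg_mul])
    have hint : ∫ x in (-1 : ℝ)..1, z (-x) ^ 2 = ∫ x in (-1 : ℝ)..1, z x ^ 2 := by
      rw [intervalIntegral.integral_comp_neg (fun x => z x ^ 2), neg_neg]
    rwa [hint, neg_neg, neg_sq] at hbound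

theorem one_sub_sq_mul_pow_four_le_of_turningPointBounds
    (H : IsLegendreSolution (turningPotential K c R) z ζ) (hB : TurningPointBounds N K c R)
    (hx : x ∈ Set.Icc (-1 : ℝ) 1) :
    (1 - x ^ 2) * z x ^ 4 ≤ 10 ^ 80 * N * (∫ x in (-1 : ℝ)..1, z x ^ 2) ^ 2 := by
  have hcont : ContinuousOn (fun x => (1 - x ^ 2) * z x ^ 4) (Set.Icc (-1) 1) :=
    ContinuousOn.mul (by fun_prop) (H.continuousOn_fst.pow 4)
  obtain ⟨m, hm, hmax⟩ := isCompact_Icc.exists_isMaxOn ⟨x, hx⟩ hcont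
  suffices hbound : (1 - m ^ 2) * z m ^ 4 ≤ 10 ^ 80 * N * (∫ x in (-1 : ℝ)..1, z x ^ 2) ^ 2 from
    (hmax hx).trans hbound
  have hN : 0 ≤ N := by linarith [hB.two_le]
  rcases eq_or_ne ((1 - m ^ 2) * z m ^ 4) 0 with h0 | h0
  · rw [h0]
    positivity
  have hz : z m ≠ 0 := fun h => h0 (by simp [h])
  have hmIoo : m ∈ Set.Ioo (-1 : ℝ) 1 :=
    ⟨hm.1.lt_of_ne fun h => h0 (by simp [← h]), hm.2.lt_of_ne fun h => h0 (by simp [h])⟩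
  have hlocal := hmax.isLocalMax (Icc_mem_nhds hmIoo.1 hmIoo.2)
  exact H.one_sub_sq_mul_pow_four_le_of_critical hB hmIoo hz
    (H.snd_eq_of_isLocalMax hmIoo hz hlocal)

end IsLegendreSolution

/-- The potential for which `weightedJacobi α β n` is a solution, where the spectral parameter `N`
stands for `2 * n + α + β + 1`. -/
noncomputable def jacobiPotential (α β N x : ℝ) : ℝ :=
  (N ^ 2 - 1) * (1 - x ^ 2) - 2 * α ^ 2 * (1 + x) - 2 * β ^ 2 * (1 - x)

/-- The function `(1-x)^(α/2) (1+x)^(β/2) P_n^{(α,β)}(x)`, a solution of the generalized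
Legendre equation with potential `jacobiPotential α β (2 * n + α + β + 1)`. -/
noncomputable def weightedJacobi (α β : ℝ) (n : ℕ) (x : ℝ) : ℝ :=
  jacobiWeight (α / 2) (β / 2) x * jacobi α β n x

/-- The function `2 (1-x²) z'` for `z = weightedJacobi α β n`, written so that it makes sense at
the end points `±1`. -/
noncomputable def weightedJacobiSnd (α β : ℝ) (n : ℕ) (x : ℝ) : ℝ :=
  jacobiWeight (α / 2) (β / 2) x *
    ((β - α - (α + β) * x) * jacobi α β n x + 2 * (1 - x ^ 2) * deriv (jacobi α β n) x)

theorem hasDerivAt_weightedJacobi (α β : ℝ) (n : ℕ) {x : ℝ} (hx : x ∈ Set.Ioo (-1 : ℝ) 1) :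
    HasDerivAt (weightedJacobi α β n) (weightedJacobiSnd α β n x / (2 * (1 - x ^ 2))) x := by
  have hφ := (one_sub_sq_pos hx).ne'
  refine ((hasDerivAt_jacobiWeight (α / 2) (β / 2) hx).fun_mul
    (differentiable_jacobi α β n x).hasDerivAt).congr_deriv ?_
  rw [weightedJacobiSnd]
  field_simp

theorem hasDerivAt_weightedJacobiSnd (α β : ℝ) (n : ℕ) {x : ℝ} (hx : x ∈ Set.Ioo (-1 : ℝ) 1) :
    HasDerivAt (weightedJacobiSnd α β n)
      (-(jacobiPotential α β (2 * n + α + β + 1) x * weightedJacobi α β n x) /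
        (2 * (1 - x ^ 2))) x := by
  have hφ := (one_sub_sq_pos hx).ne'
  have hℓ : HasDerivAt (fun x => β - α - (α + β) * x) (-((α + β) * 1)) x :=
    ((hasDerivAt_id x).const_mul (α + β)).const_sub (β - α)
  have hφ' : HasDerivAt (fun x : ℝ => 2 * (1 - x ^ 2)) (2 * -(2 * x)) x := by
    simpa using ((hasDerivAt_pow 2 x).const_sub 1).const_mul 2
  refine ((hasDerivAt_jacobiWeight (α / 2) (β / 2) hx).fun_mul
    ((hℓ.fun_mul (differentiable_jacobi α β n x).hasDerivAt).fun_add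
      (hφ'.fun_mul (differentiable_deriv_jacobi α β n x).hasDerivAt))).congr_deriv ?_
  rw [jacobiPotential, weightedJacobi]
  field_simp
  linear_combination 4 * (1 - x ^ 2) * jacobiWeight (α / 2) (β / 2) x *
    jacobi_differential_equation α β n x

theorem continuous_weightedJacobi {α β : ℝ} (hα : 0 ≤ α) (hβ : 0 ≤ β) (n : ℕ) :
    Continuous (weightedJacobi α β n) :=
  (continuous_jacobiWeight (div_nonneg hα zero_le_two) (div_nonneg hβ zero_le_two)).mul
    (differentiable_jacobi α β n).continuous

theorem continuous_weightedJacobiSnd {α β : ℝ} (hα : 0 ≤ α) (hβ : 0 ≤ β) (n : ℕ) :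
    Continuous (weightedJacobiSnd α β n) := by
  have hw := continuous_jacobiWeight (div_nonneg hα zero_le_two) (div_nonneg hβ zero_le_two)
  have hP := (differentiable_jacobi α β n).continuous
  have hP' := (differentiable_deriv_jacobi α β n).continuous
  unfold weightedJacobiSnd
  fun_prop

theorem mul_jacobiWeight_half_one (α β : ℝ) : α * jacobiWeight (α / 2) β 1 = 0 := by
  rcases eq_or_ne α 0 with rfl | hα
  · exact zero_mul _
  · rw [jacobiWeight, sub_self, Real.zero_rpow (div_ne_zero hα two_ne_zero), zero_mul, mul_zero]

theorem mul_jacobiWeight_half_neg_one (α β : ℝ) : β * jacobiWeight α (β / 2) (-1) = 0 := by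
  rcases eq_or_ne β 0 with rfl | hβ
  · exact zero_mul _
  · rw [jacobiWeight, add_neg_cancel, Real.zero_rpow (div_ne_zero hβ two_ne_zero), mul_zero,
      mul_zero]

theorem isLegendreSolution_weightedJacobi {α β : ℝ} (hα : 0 ≤ α) (hβ : 0 ≤ β) (n : ℕ) :
    IsLegendreSolution (jacobiPotential α β (2 * n + α + β + 1)) (weightedJacobi α β n)
      (weightedJacobiSnd α β n) where
  continuousOn_fst := (continuous_weightedJacobi hα hβ n).continuousOn
  continuousOn_snd := (continuous_weightedJacobiSnd hα hβ n).continuousOn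
  hasDerivAt_fst _ hx := hasDerivAt_weightedJacobi α β n hx
  hasDerivAt_snd _ hx := hasDerivAt_weightedJacobiSnd α β n hx
  potential_mul_one := by
    rw [jacobiPotential, weightedJacobi]
    linear_combination (-4 * α * jacobi α β n 1) * mul_jacobiWeight_half_one α (β / 2)
  potential_mul_neg_one := by
    rw [jacobiPotential, weightedJacobi]
    linear_combination (-4 * β * jacobi α β n (-1)) * mul_jacobiWeight_half_neg_one (α / 2) β
  snd_one := by
    rw [weightedJacobiSnd]
    linear_combination (-2 * jacobi α β n 1) * mul_jacobiWeight_half_one α (β / 2)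
  snd_neg_one := by
    rw [weightedJacobiSnd]
    linear_combination (2 * jacobi α β n (-1)) * mul_jacobiWeight_half_neg_one (α / 2) β

theorem weightedJacobi_sq (α β : ℝ) (n : ℕ) {x : ℝ} (hx : x ∈ Set.Icc (-1 : ℝ) 1) :
    weightedJacobi α β n x ^ 2 = jacobiWeight α β x * jacobi α β n x ^ 2 := by
  have hsq (a : ℝ) {t : ℝ} (ht : 0 ≤ t) : (t ^ (a / 2)) ^ 2 = t ^ a := by
    rw [← Real.rpow_mul_natCast ht, Nat.cast_ofNat, div_mul_cancel₀ a two_ne_zero]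
  rw [weightedJacobi, jacobiWeight, mul_pow, mul_pow, hsq α (by linarith [hx.2]),
    hsq β (by linarith [hx.1]), jacobiWeight]

theorem integral_weightedJacobi_sq (α β : ℝ) (n : ℕ) :
    ∫ x in (-1 : ℝ)..1, weightedJacobi α β n x ^ 2 = jacobiNormSq α β n :=
  intervalIntegral.integral_congr fun x hx =>
    weightedJacobi_sq α β n (by rwa [Set.uIcc_of_le (by norm_num)] at hx)

section TurningPoints

/-- The midpoint of the two zeros of `jacobiPotential α β N`. -/
noncomputable def jacobiCenter (α β N : ℝ) : ℝ := (β ^ 2 - α ^ 2) / (N ^ 2 - 1)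

/-- Half the distance between the two zeros of `jacobiPotential α β N`. -/
noncomputable def jacobiRadius (α β N : ℝ) : ℝ :=
  √((N ^ 2 - 1 - (α + β) ^ 2) * (N ^ 2 - 1 - (α - β) ^ 2)) / (N ^ 2 - 1)

variable {α β N : ℝ}

theorem sq_sub_one_mul_jacobiCenter (hN : 1 < N) :
    (N ^ 2 - 1) * jacobiCenter α β N = β ^ 2 - α ^ 2 :=
  mul_div_cancel₀ _ (by nlinarith : (0 : ℝ) < N ^ 2 - 1).ne'

theorem two_mul_sub_one_le_sub_add_sq (hα : 0 ≤ α) (hβ : 0 ≤ β) (hN : α + β + 1 ≤ N) :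
    2 * (N - 1) ≤ N ^ 2 - 1 - (α + β) ^ 2 := by
  nlinarith

theorem two_mul_sub_one_le_sub_sub_sq (hα : 0 ≤ α) (hβ : 0 ≤ β) (hN : α + β + 1 ≤ N) :
    2 * (N - 1) ≤ N ^ 2 - 1 - (α - β) ^ 2 := by
  linarith [two_mul_sub_one_le_sub_add_sq hα hβ hN, mul_nonneg hα hβ]

theorem sq_mul_jacobiRadius (hα : 0 ≤ α) (hβ : 0 ≤ β) (hN : α + β + 1 ≤ N) (hN1 : 1 < N) :
    ((N ^ 2 - 1) * jacobiRadius α β N) ^ 2 =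
      (N ^ 2 - 1 - (α + β) ^ 2) * (N ^ 2 - 1 - (α - β) ^ 2) := by
  have h1 := two_mul_sub_one_le_sub_add_sq hα hβ hN
  have h2 := two_mul_sub_one_le_sub_sub_sq hα hβ hN
  rw [jacobiRadius, mul_div_cancel₀ _ (by nlinarith : (0 : ℝ) < N ^ 2 - 1).ne',
    Real.sq_sqrt (mul_nonneg (by linarith) (by linarith))]

theorem jacobiPotential_eq_turningPotential (hα : 0 ≤ α) (hβ : 0 ≤ β) (hN : α + β + 1 ≤ N)
    (hN1 : 1 < N) :
    jacobiPotential α β N =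
      turningPotential (N ^ 2 - 1) (jacobiCenter α β N) (jacobiRadius α β N) := by
  have hK : N ^ 2 - 1 ≠ 0 := by nlinarith
  have hc := sq_sub_one_mul_jacobiCenter (α := α) (β := β) hN1
  have hR := sq_mul_jacobiRadius hα hβ hN hN1
  funext x
  apply mul_left_cancel₀ hK
  rw [jacobiPotential, turningPotential]
  linear_combination -hR + ((N ^ 2 - 1) * jacobiCenter α β N + β ^ 2 - α ^ 2 -
    2 * (N ^ 2 - 1) * x) * hc

theorem two_mul_sub_one_le_mul_jacobiRadius (hα : 0 ≤ α) (hβ : 0 ≤ β) (hN : α + β + 1 ≤ N)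
    (hN1 : 1 < N) : 2 * (N - 1) ≤ (N ^ 2 - 1) * jacobiRadius α β N := by
  have h1 := two_mul_sub_one_le_sub_add_sq hα hβ hN
  have h2 := two_mul_sub_one_le_sub_sub_sq hα hβ hN
  have hK : 0 ≤ N ^ 2 - 1 := by nlinarith
  refine le_of_sq_le_sq ?_ (mul_nonneg hK (div_nonneg (Real.sqrt_nonneg _) hK))
  rw [sq_mul_jacobiRadius hα hβ hN hN1, sq]
  exact mul_le_mul h1 h2 (by linarith) (by linarith)

theorem mul_one_sub_jacobiCenter_sq_le (hα : 0 ≤ α) (hβ : 0 ≤ β) (hN1 : 1 < N) :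
    (N ^ 2 - 1) * (1 - jacobiCenter α β N ^ 2) ≤ 2 * (N ^ 2 - 1 - (α - β) ^ 2) := by
  have hc := sq_sub_one_mul_jacobiCenter (α := α) (β := β) hN1
  have hK : 0 ≤ N ^ 2 - 1 := by nlinarith
  rcases le_total α β with h | h
  · linarith [mul_nonneg hα (sub_nonneg.2 h),
      mul_nonneg hK (mul_self_nonneg (1 - jacobiCenter α β N))]
  · linarith [mul_nonneg hβ (sub_nonneg.2 h),
      mul_nonneg hK (mul_self_nonneg (1 + jacobiCenter α β N))]

theorem abs_jacobiCenter_le_one (hα : 0 ≤ α) (hβ : 0 ≤ β) (hN : α + β + 1 ≤ N) (hN1 : 1 < N) :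
    |jacobiCenter α β N| ≤ 1 := by
  have hK : 0 < N ^ 2 - 1 := by nlinarith
  have h := two_mul_sub_one_le_sub_add_sq hα hβ hN
  rw [jacobiCenter, abs_div, abs_of_pos hK, div_le_one hK, abs_le]
  constructor <;> nlinarith

-- The potential is nonpositive at `±1`, so both turning points lie in `[-1, 1]`.
theorem jacobiRadius_le_one_sub_abs_jacobiCenter (hα : 0 ≤ α) (hβ : 0 ≤ β)
    (hN : α + β + 1 ≤ N) (hN1 : 1 < N) :
    jacobiRadius α β N ≤ 1 - |jacobiCenter α β N| := by
  have hK : 0 < N ^ 2 - 1 := by nlinarith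
  have hc := abs_le.1 (abs_jacobiCenter_le_one hα hβ hN hN1)
  have hT := jacobiPotential_eq_turningPotential hα hβ hN hN1
  have hendpoint (x : ℝ) (hx : jacobiPotential α β N x ≤ 0) :
      jacobiRadius α β N ^ 2 ≤ (x - jacobiCenter α β N) ^ 2 := by
    rw [hT] at hx
    exact sub_nonpos.1 (nonpos_of_mul_nonpos_right hx hK)
  have hone := hendpoint 1 (by rw [jacobiPotential]; nlinarith [sq_nonneg α])
  have hneg := hendpoint (-1) (by rw [jacobiPotential]; nlinarith [sq_nonneg β])
  rw [le_sub_comm, abs_le']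
  constructor
  · linarith [le_of_sq_le_sq hone (by linarith)]
  · rw [← neg_sq (-1 - _)] at hneg
    linarith [le_of_sq_le_sq hneg (by linarith)]

theorem turningPointBounds_jacobi (hα : 0 ≤ α) (hβ : 0 ≤ β) (hN : α + β + 1 ≤ N) (hN2 : 2 ≤ N) :
    TurningPointBounds N (N ^ 2 - 1) (jacobiCenter α β N) (jacobiRadius α β N) := by
  have hN1 : 1 < N := by linarith
  have hR := jacobiRadius_le_one_sub_abs_jacobiCenter hα hβ hN hN1
  refine ⟨rfl, hN2, by linarith [neg_abs_le (jacobiCenter α β N)],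
    by linarith [le_abs_self (jacobiCenter α β N)], ?_, ?_⟩
  · refine le_of_mul_le_mul_left ?_ (sub_pos.2 hN1)
    linarith [two_mul_sub_one_le_mul_jacobiRadius hα hβ hN hN1]
  · have hK : 0 < N ^ 2 - 1 := by nlinarith
    have hF₁ := two_mul_sub_one_le_sub_add_sq hα hβ hN
    have hF₂ := two_mul_sub_one_le_sub_sub_sq hα hβ hN
    refine le_of_mul_le_mul_left ?_ (mul_pos (sub_pos.2 hN1) hK)
    calc (N - 1) * (N ^ 2 - 1) * (1 - jacobiCenter α β N ^ 2)
        ≤ (N - 1) * (2 * (N ^ 2 - 1 - (α - β) ^ 2)) := by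
          rw [mul_assoc]
          exact mul_le_mul_of_nonneg_left (mul_one_sub_jacobiCenter_sq_le hα hβ hN1)
            (by linarith)
      _ = 2 * (N - 1) * (N ^ 2 - 1 - (α - β) ^ 2) := by ring
      _ ≤ (N ^ 2 - 1 - (α + β) ^ 2) * (N ^ 2 - 1 - (α - β) ^ 2) :=
          mul_le_mul_of_nonneg_right hF₁ (by linarith)
      _ = ((N ^ 2 - 1) * jacobiRadius α β N) ^ 2 := (sq_mul_jacobiRadius hα hβ hN hN1).symm
      _ = (N - 1) * (N ^ 2 - 1) * ((N + 1) * jacobiRadius α β N ^ 2) := by ring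

end TurningPoints

theorem half_le_rpow {t a : ℝ} (ht : t ∈ Set.Icc (0 : ℝ) 2) (ha0 : 0 ≤ a) (ha1 : a ≤ 1) :
    t / 2 ≤ t ^ a := by
  rcases le_total 1 t with h | h
  · linarith [Real.one_le_rpow h ha0, ht.2]
  · linarith [Real.self_le_rpow_of_le_one ht.1 h ha1, ht.1]

theorem third_le_jacobiNormSq_zero {α β : ℝ} (hα : α ∈ Set.Icc (0 : ℝ) 1)
    (hβ : β ∈ Set.Icc (0 : ℝ) 1) : 1 / 3 ≤ jacobiNormSq α β 0 := by
  have hint : ∫ x in (-1 : ℝ)..1, (1 - x ^ 2) / 4 = 1 / 3 := by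
    rw [intervalIntegral.integral_div, intervalIntegral.integral_sub (by simp)
      ((continuous_pow 2).intervalIntegrable _ _), integral_pow]
    norm_num
  simp only [jacobiNormSq, jacobi_zero, one_pow, mul_one]
  rw [← hint]
  refine intervalIntegral.integral_mono_on (by norm_num)
    (Continuous.intervalIntegrable (by fun_prop) _ _)
    ((continuous_jacobiWeight hα.1 hβ.1).intervalIntegrable _ _) fun x hx => ?_
  have h1 := half_le_rpow (t := 1 - x) ⟨by linarith [hx.2], by linarith [hx.1]⟩ hα.1 hα.2
  have h2 := half_le_rpow (t := 1 + x) ⟨by linarith [hx.1], by linarith [hx.2]⟩ hβ.1 hβ.2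
  calc (1 - x ^ 2) / 4 = (1 - x) / 2 * ((1 + x) / 2) := by ring
    _ ≤ _ := mul_le_mul h1 h2 (by linarith [hx.1]) (Real.rpow_nonneg (by linarith [hx.2]) _)

theorem jacobiWeight_le_two_rpow {α β x : ℝ} (hα : 0 ≤ α) (hβ : 0 ≤ β)
    (hx : x ∈ Set.Icc (-1 : ℝ) 1) : jacobiWeight α β x ≤ 2 ^ (α + β) := by
  rw [jacobiWeight, Real.rpow_add two_pos]
  exact mul_le_mul (Real.rpow_le_rpow (by linarith [hx.2]) (by linarith [hx.1]) hα)
    (Real.rpow_le_rpow (by linarith [hx.1]) (by linarith [hx.2]) hβ)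
    (Real.rpow_nonneg (by linarith [hx.1]) _) (by positivity)

theorem one_sub_sq_mul_jacobiWeight_sq_le {α β x : ℝ} (hα : 0 ≤ α) (hβ : 0 ≤ β)
    (hαβ : α + β ≤ 1) (hx : x ∈ Set.Icc (-1 : ℝ) 1) :
    (1 - x ^ 2) * jacobiWeight α β x ^ 2 ≤ 36 * jacobiNormSq α β 0 ^ 2 := by
  have hw : jacobiWeight α β x ≤ 2 := calc
    _ ≤ (2 : ℝ) ^ (α + β) := jacobiWeight_le_two_rpow hα hβ hx
    _ ≤ 2 ^ (1 : ℝ) := Real.rpow_le_rpow_of_exponent_le one_le_two hαβ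
    _ = 2 := Real.rpow_one 2
  have hI := third_le_jacobiNormSq_zero ⟨hα, by linarith⟩ ⟨hβ, by linarith⟩
  calc (1 - x ^ 2) * jacobiWeight α β x ^ 2 ≤ 1 * 2 ^ 2 :=
        mul_le_mul (by linarith [sq_nonneg x])
          (pow_le_pow_left₀ (jacobiWeight_nonneg α β hx) hw 2) (sq_nonneg _) zero_le_one
    _ = 36 * (1 / 3) ^ 2 := by norm_num
    _ ≤ 36 * jacobiNormSq α β 0 ^ 2 := by gcongr

theorem one_sub_sq_mul_jacobiWeight_mul_jacobi_sq_sq_le {α β x : ℝ} (hα : 0 ≤ α) (hβ : 0 ≤ β)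
    (n : ℕ) (hx : x ∈ Set.Icc (-1 : ℝ) 1) :
    (1 - x ^ 2) * (jacobiWeight α β x * jacobi α β n x ^ 2) ^ 2 ≤
      10 ^ 80 * (2 * n + α + β + 1) * jacobiNormSq α β n ^ 2 := by
  have hn : (0 : ℝ) ≤ n := n.cast_nonneg
  rcases le_or_gt 2 (2 * n + α + β + 1) with hN | hN
  · have hsol := isLegendreSolution_weightedJacobi hα hβ n
    rw [jacobiPotential_eq_turningPotential hα hβ (by linarith) (by linarith)] at hsol
    have key := hsol.one_sub_sq_mul_pow_four_le_of_turningPointBounds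
      (turningPointBounds_jacobi hα hβ (by linarith) hN) hx
    rwa [integral_weightedJacobi_sq, pow_mul _ 2 2, weightedJacobi_sq α β n hx] at key
  · obtain rfl : n = 0 := by
      by_contra h0
      have : (1 : ℝ) ≤ n := by exact_mod_cast Nat.one_le_iff_ne_zero.2 h0
      linarith
    rw [Nat.cast_zero] at hN ⊢
    rw [jacobi_zero, one_pow, mul_one]
    refine (one_sub_sq_mul_jacobiWeight_sq_le hα hβ (by linarith) hx).trans ?_
    gcongr
    linarith

theorem rpow_half_add_quarter_pow_four {t a : ℝ} (ht : 0 ≤ t) (ha : 0 ≤ a) :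
    (t ^ (a / 2 + 1 / 4)) ^ 4 = t * (t ^ a) ^ 2 := by
  have e : (a / 2 + 1 / 4) * (4 : ℕ) = a * (2 : ℕ) + 1 := by push_cast; ring
  rw [← Real.rpow_mul_natCast ht, e, Real.rpow_add_of_nonneg ht (by positivity) zero_le_one,
    Real.rpow_one, Real.rpow_mul_natCast ht, mul_comm]

theorem half_rpow_mul_half_rpow_mul_abs_jacobi_pow_four {α β x : ℝ} (hα : 0 ≤ α) (hβ : 0 ≤ β)
    (n : ℕ) (hx : x ∈ Set.Icc (-1 : ℝ) 1) :
    (((1 - x) / 2) ^ (α / 2 + 1 / 4) * ((1 + x) / 2) ^ (β / 2 + 1 / 4) * |jacobi α β n x|) ^ 4 =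
      (1 - x ^ 2) * (jacobiWeight α β x * jacobi α β n x ^ 2) ^ 2 / (2 ^ (α + β + 1)) ^ 2 := by
  have h1 : 0 ≤ 1 - x := by linarith [hx.2]
  have h2 : 0 ≤ 1 + x := by linarith [hx.1]
  have hP : |jacobi α β n x| ^ 4 = (jacobi α β n x ^ 2) ^ 2 := by
    rw [← sq_abs (jacobi α β n x), ← pow_mul]
  rw [mul_pow, mul_pow, hP, rpow_half_add_quarter_pow_four (by positivity) hα,
    rpow_half_add_quarter_pow_four (by positivity) hβ, Real.div_rpow h1 zero_le_two,
    Real.div_rpow h2 zero_le_two, jacobiWeight, Real.rpow_add_one two_ne_zero,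
    Real.rpow_add two_pos]
  field_simp
  ring

theorem mul_rpow_neg_quarter_mul_rpow_half_pow_four (C : ℝ) {s t : ℝ} (hs : 0 ≤ s)
    (ht : 0 ≤ t) :
    (C * s ^ (-(1 / 4) : ℝ) * t ^ ((1 : ℝ) / 2)) ^ 4 = C ^ 4 * t ^ 2 / s := by
  have hs' : (s ^ (-(1 / 4) : ℝ)) ^ 4 = s⁻¹ := by
    rw [← Real.rpow_mul_natCast hs, ← Real.rpow_neg_one]
    norm_num
  have ht' : (t ^ ((1 : ℝ) / 2)) ^ 4 = t ^ 2 := by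
    rw [← Real.rpow_mul_natCast ht, ← Real.rpow_natCast t 2]
    norm_num
  rw [mul_pow, mul_pow, hs', ht']
  ring

theorem stmt6 :
    ∃ C : ℝ, 0 < C ∧
      ∀ (α β : ℝ), 0 ≤ α → 0 ≤ β → ∀ (n : ℕ), ∀ x ∈ Set.Icc (-1 : ℝ) 1,
        ((1 - x) / 2) ^ (α / 2 + 1 / 4) * ((1 + x) / 2) ^ (β / 2 + 1 / 4) * |jacobi α β n x|
          ≤ C * (2 * (n : ℝ) + α + β + 1) ^ (-(1 / 4) : ℝ) *
              (Real.Gamma ((n : ℝ) + α + 1) * Real.Gamma ((n : ℝ) + β + 1) /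
                  (Real.Gamma ((n : ℝ) + 1) * Real.Gamma ((n : ℝ) + α + β + 1)))
                ^ ((1 : ℝ) / 2) := by
  refine ⟨10 ^ 20, by positivity, fun α β hα hβ n x hx => ?_⟩
  have hN : 0 < 2 * (n : ℝ) + α + β + 1 := by positivity
  have hΓ : 0 ≤ Real.Gamma ((n : ℝ) + α + 1) * Real.Gamma ((n : ℝ) + β + 1) /
      (Real.Gamma ((n : ℝ) + 1) * Real.Gamma ((n : ℝ) + α + β + 1)) := by positivity
  have key := one_sub_sq_mul_jacobiWeight_mul_jacobi_sq_sq_le hα hβ n hx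
  rw [jacobiNormSq_eq hα hβ n] at key
  refine le_of_pow_le_pow_left₀ four_ne_zero (by positivity) ?_
  rw [half_rpow_mul_half_rpow_mul_abs_jacobi_pow_four hα hβ n hx,
    mul_rpow_neg_quarter_mul_rpow_half_pow_four _ hN.le hΓ, div_le_iff₀ (by positivity)]
  refine key.trans_eq ?_
  field_simp
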